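/- arXiv:dg-ga/9511009 — 7 statements merged into one kernel-verified Lean document; each statement's English description precedes it below -/
import Mathlib

section
/- Let ε ∈ (0, π/2), let k ≥ 1 be a natural number, and let (a_n)_{n∈ℕ} be a sequence of nonzero complex numbers with |arg a_n| ≤ π/2 − ε for all n and ∑_n |a_n|^{−k} < ∞. Then for every t > 0 the theta series Θ(t) := ∑_n e^{−t·a_n} converges absolutely, and for every s ∈ ℂ with Re(s) > k the identity Γ(s) · ∑_n a_n^{−s} = ∫₀^∞ t^{s−1} · Θ(t) dt holds, the integral being absolutely convergent. -/
open Complex Real MeasureTheory Set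

open Filter Topology

/-! For `Re a > 0` the substitution `u = t * a` gives
`∫ t ^ (s - 1) * exp (-t * a) = Γ s * a ^ (-s)` when `a` is real; both sides are holomorphic in `a`
on the right half-plane, so the identity theorem extends this to complex `a`. The norm of the
integrand has integral `Γ (Re s) * (Re a) ^ (-Re s)`, so summability of `(Re (a n)) ^ (-Re s)`
allows termwise integration of the theta series. A bound `|arg a| ≤ θ < π / 2` makes `Re a`
comparable to `|a|`, since `Re a = |a| * cos (arg a)`. -/

theorem tendsto_ofReal_nhdsNE (x : ℝ) :
    Tendsto ((↑) : ℝ → ℂ) (𝓝[≠] x) (𝓝[≠] (x : ℂ)) :=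
  continuous_ofReal.continuousWithinAt.tendsto_nhdsWithin fun _ hy => ofReal_injective.ne hy

theorem eqOn_of_preconnected_of_frequently_eq_ofReal {E : Type*} [NormedAddCommGroup E]
    [NormedSpace ℂ E] {f g : ℂ → E} {U : Set ℂ} (hf : AnalyticOnNhd ℂ f U)
    (hg : AnalyticOnNhd ℂ g U) (hU : IsPreconnected U) {x : ℝ} (hx : (x : ℂ) ∈ U)
    (hfg : ∃ᶠ r : ℝ in 𝓝[≠] x, f r = g r) : EqOn f g U :=
  hf.eqOn_of_preconnected_of_frequently_eq hg hU hx ((tendsto_ofReal_nhdsNE x).frequently hfg)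

section TermwiseMellin

variable {ι E : Type*} [Countable ι] [NormedAddCommGroup E] [CompleteSpace E]

theorem integrable_tsum_of_summable_integral_norm {α : Type*} [MeasurableSpace α] {μ : Measure α}
    {F : ι → α → E} (hF : ∀ i, Integrable (F i) μ) (hsum : Summable fun i => ∫ x, ‖F i x‖ ∂μ) :
    Integrable (fun x => ∑' i, F i x) μ := by
  refine ⟨.tsum fun i => (hF i).1, ?_⟩
  calc ∫⁻ x, ‖∑' i, F i x‖ₑ ∂μ
    _ ≤ ∫⁻ x, ∑' i, ‖F i x‖ₑ ∂μ := lintegral_mono fun x => enorm_tsum_le_tsum_enorm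
    _ = ∑' i, ∫⁻ x, ‖F i x‖ₑ ∂μ := lintegral_tsum fun i => (hF i).1.enorm
    _ = ∑' i, ENNReal.ofReal (∫ x, ‖F i x‖ ∂μ) :=
      tsum_congr fun i => (ofReal_integral_norm_eq_lintegral_enorm (hF i)).symm
    _ < ⊤ := hsum.tsum_ofReal_lt_top

variable [NormedSpace ℂ E]

theorem hasMellin_tsum {f : ι → ℝ → E} {s : ℂ} (hf : ∀ i, MellinConvergent (f i) s)
    (hsum : Summable fun i => ∫ t in Ioi (0 : ℝ), t ^ (s.re - 1) * ‖f i t‖) :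
    HasMellin (fun t => ∑' i, f i t) s (∑' i, mellin (f i) s) := by
  have hnorm (i : ι) : ∫ t in Ioi (0 : ℝ), ‖(t : ℂ) ^ (s - 1) • f i t‖ =
      ∫ t in Ioi (0 : ℝ), t ^ (s.re - 1) * ‖f i t‖ :=
    setIntegral_congr_fun measurableSet_Ioi fun t ht => by
      simp only [norm_smul, norm_cpow_eq_rpow_re_of_pos ht, sub_re, one_re]
  simp only [← hnorm] at hsum
  simp only [HasMellin, MellinConvergent, mellin, ← tsum_const_smul'']
  exact ⟨integrable_tsum_of_summable_integral_norm hf hsum,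
    (integral_tsum_of_summable_integral_norm hf hsum).symm⟩

end TermwiseMellin

section MellinExp

variable {s z : ℂ}

theorem norm_cexp_neg_mul (t : ℝ) (z : ℂ) : ‖cexp (-(t : ℂ) * z)‖ = rexp (-(z.re * t)) := by
  simp [Complex.norm_exp, mul_comm]

theorem integrableOn_rpow_mul_exp_neg_mul {σ r : ℝ} (hσ : 0 < σ) (hr : 0 < r) :
    IntegrableOn (fun t : ℝ => t ^ (σ - 1) * rexp (-(r * t))) (Ioi 0) := by
  simpa only [Real.rpow_one, neg_mul] using
    integrableOn_rpow_mul_exp_neg_mul_rpow (by linarith : -1 < σ - 1) one_pos hr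

theorem mellinConvergent_cexp_neg_mul (hs : 0 < s.re) (hz : 0 < z.re) :
    MellinConvergent (fun t : ℝ => cexp (-(t : ℂ) * z)) s := by
  refine (mellin_convergent_iff_norm subset_rfl measurableSet_Ioi (by fun_prop)).2 ?_
  simpa only [norm_cexp_neg_mul] using integrableOn_rpow_mul_exp_neg_mul hs hz

theorem integral_rpow_mul_norm_cexp_neg_mul {σ : ℝ} (hσ : 0 < σ) (hz : 0 < z.re) :
    ∫ t in Ioi (0 : ℝ), t ^ (σ - 1) * ‖cexp (-(t : ℂ) * z)‖ = z.re⁻¹ ^ σ * Real.Gamma σ := by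
  simp only [norm_cexp_neg_mul, Real.integral_rpow_mul_exp_neg_mul_Ioi hσ hz, one_div]

theorem hasDerivAt_cpow_smul_cexp_neg_mul (s z : ℂ) {t : ℝ} (ht : t ≠ 0) :
    HasDerivAt (fun w : ℂ => (t : ℂ) ^ (s - 1) • cexp (-(t : ℂ) * w))
      (-((t : ℂ) ^ (s + 1 - 1) • cexp (-(t : ℂ) * z))) z := by
  have hexp : HasDerivAt (fun w : ℂ => cexp (-(t : ℂ) * w)) (cexp (-(t : ℂ) * z) * -t) z :=
    (hasDerivAt_const_mul (-(t : ℂ))).cexp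
  convert! hexp.const_smul ((t : ℂ) ^ (s - 1)) using 1
  rw [add_sub_right_comm, cpow_add _ _ (ofReal_ne_zero.2 ht), cpow_one]
  simp only [smul_eq_mul]
  ring

theorem hasDerivAt_mellin_cexp_neg_mul (hs : 0 < s.re) (hz : 0 < z.re) :
    HasDerivAt (fun w : ℂ => mellin (fun t : ℝ => cexp (-(t : ℂ) * w)) s)
      (-mellin (fun t : ℝ => cexp (-(t : ℂ) * z)) (s + 1)) z := by
  have hz2 : 0 < z.re / 2 := half_pos hz
  have hs1 : 0 < (s + 1).re := by simpa only [add_re, one_re] using add_pos hs one_pos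
  have hU : {w : ℂ | z.re / 2 < w.re} ∈ 𝓝 z :=
    (isOpen_lt continuous_const continuous_re).mem_nhds (half_lt_self hz)
  have hbound : ∀ᵐ t : ℝ ∂volume.restrict (Ioi (0 : ℝ)), ∀ w ∈ {w : ℂ | z.re / 2 < w.re},
      ‖-((t : ℂ) ^ (s + 1 - 1) • cexp (-(t : ℂ) * w))‖ ≤
        t ^ ((s + 1).re - 1) * rexp (-(z.re / 2 * t)) := by
    refine ae_restrict_of_forall_mem measurableSet_Ioi fun t (ht : 0 < t) w hw => ?_
    rw [norm_neg, norm_smul, norm_cpow_eq_rpow_re_of_pos ht, norm_cexp_neg_mul, sub_re, one_re]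
    gcongr
    exact le_of_lt hw
  have hderiv : ∀ᵐ t : ℝ ∂volume.restrict (Ioi (0 : ℝ)), ∀ w ∈ {w : ℂ | z.re / 2 < w.re},
      HasDerivAt (fun w : ℂ => (t : ℂ) ^ (s - 1) • cexp (-(t : ℂ) * w))
        (-((t : ℂ) ^ (s + 1 - 1) • cexp (-(t : ℂ) * w))) w :=
    ae_restrict_of_forall_mem measurableSet_Ioi fun t ht w _ =>
      hasDerivAt_cpow_smul_cexp_neg_mul s w (ne_of_gt ht)
  have hmeas : ∀ᶠ w in 𝓝 z, AEStronglyMeasurable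
      (fun t : ℝ => (t : ℂ) ^ (s - 1) • cexp (-(t : ℂ) * w)) (volume.restrict (Ioi 0)) := by
    filter_upwards [hU] with w hw
    exact (mellinConvergent_cexp_neg_mul hs (hz2.trans hw)).aestronglyMeasurable
  rw [mellin, ← integral_neg]
  exact (hasDerivAt_integral_of_dominated_loc_of_deriv_le hU hmeas
    (mellinConvergent_cexp_neg_mul hs hz)
    (mellinConvergent_cexp_neg_mul hs1 hz).aestronglyMeasurable.neg hbound
    (integrableOn_rpow_mul_exp_neg_mul hs1 hz2) hderiv).2

theorem mellin_cexp_neg_mul_ofReal {r : ℝ} (hs : 0 < s.re) (hr : 0 < r) :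
    mellin (fun t : ℝ => cexp (-(t : ℂ) * r)) s = Complex.Gamma s * (r : ℂ) ^ (-s) := by
  have hscale := mellin_comp_mul_right (fun t : ℝ => (rexp (-t) : ℂ)) s hr
  rw [← GammaIntegral_eq_mellin, ← Complex.Gamma_eq_integral hs, smul_eq_mul, mul_comm] at hscale
  simpa only [ofReal_exp, ofReal_neg, ofReal_mul, neg_mul] using hscale

theorem mellin_cexp_neg_mul (hs : 0 < s.re) (hz : 0 < z.re) :
    mellin (fun t : ℝ => cexp (-(t : ℂ) * z)) s = Complex.Gamma s * z ^ (-s) := by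
  have hopen : IsOpen {w : ℂ | 0 < w.re} := isOpen_lt continuous_const continuous_re
  have hmellin : DifferentiableOn ℂ (fun w => mellin (fun t : ℝ => cexp (-(t : ℂ) * w)) s)
      {w | 0 < w.re} := fun w hw =>
    (hasDerivAt_mellin_cexp_neg_mul hs hw).differentiableAt.differentiableWithinAt
  have hcpow : DifferentiableOn ℂ (fun w : ℂ => Complex.Gamma s * w ^ (-s)) {w | 0 < w.re} :=
    fun w hw => ((differentiableAt_id.cpow_const (.inl hw)).const_mul _).differentiableWithinAt
  have hreal : ∀ᶠ r : ℝ in 𝓝[≠] 1, mellin (fun t : ℝ => cexp (-(t : ℂ) * r)) s =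
      Complex.Gamma s * (r : ℂ) ^ (-s) :=
    eventually_nhdsWithin_of_eventually_nhds
      ((eventually_gt_nhds one_pos).mono fun r => mellin_cexp_neg_mul_ofReal hs)
  exact eqOn_of_preconnected_of_frequently_eq_ofReal (hmellin.analyticOnNhd hopen)
    (hcpow.analyticOnNhd hopen) (convex_halfSpace_re_gt 0).isPreconnected
    (show 0 < ((1 : ℝ) : ℂ).re from one_pos) hreal.frequently hz

theorem hasMellin_tsum_cexp_neg_mul {ι : Type*} [Countable ι] {a : ι → ℂ} (hs : 0 < s.re)
    (ha : ∀ i, 0 < (a i).re) (hsum : Summable fun i => (a i).re⁻¹ ^ s.re) :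
    HasMellin (fun t : ℝ => ∑' i, cexp (-(t : ℂ) * a i)) s
      (Complex.Gamma s * ∑' i, a i ^ (-s)) := by
  simp only [← tsum_mul_left, ← mellin_cexp_neg_mul hs (ha _)]
  refine hasMellin_tsum (fun i => mellinConvergent_cexp_neg_mul hs (ha i)) ?_
  simpa only [integral_rpow_mul_norm_cexp_neg_mul hs (ha _)] using hsum.mul_right _

end MellinExp

section Summability

variable {ι : Type*} {κ : ℝ}

theorem summable_rpow_of_exponent_ge {f : ι → ℝ} (hf : ∀ i, 0 ≤ f i) {p q : ℝ} (hp : 0 < p)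
    (hpq : p ≤ q) (hsum : Summable fun i => f i ^ p) : Summable fun i => f i ^ q := by
  have memℓp_iff {r : ℝ} (hr : 0 < r) :
      Memℓp f (ENNReal.ofReal r) ↔ Summable fun i => f i ^ r := by
    rw [memℓp_gen_iff (by rwa [ENNReal.toReal_ofReal hr.le])]
    simp only [Real.norm_of_nonneg (hf _), ENNReal.toReal_ofReal hr.le]
  exact (memℓp_iff (hp.trans_le hpq)).1
    (((memℓp_iff hp).2 hsum).of_exponent_ge (ENNReal.ofReal_le_ofReal hpq))

theorem exp_neg_mul_le_rpow_mul_inv_rpow {x t : ℝ} (hκ : 0 ≤ κ) (ht : 0 < t) (hx : 0 < x) :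
    rexp (-(x * t)) ≤ (κ / t) ^ κ * x⁻¹ ^ κ := by
  have h := ProbabilityTheory.rpow_abs_le_mul_exp_abs x hκ ht.ne'
  rw [abs_of_pos hx, abs_of_pos ht] at h
  rwa [Real.exp_neg, Real.inv_rpow hx.le, ← div_eq_mul_inv, le_div_iff₀ (by positivity),
    inv_mul_le_iff₀ (Real.exp_pos _), mul_comm x, mul_comm (rexp _)]

theorem summable_exp_neg_mul {x : ι → ℝ} (hx : ∀ i, 0 < x i) (hκ : 0 ≤ κ)
    (hsum : Summable fun i => (x i)⁻¹ ^ κ) {t : ℝ} (ht : 0 < t) :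
    Summable fun i => rexp (-(x i * t)) :=
  .of_nonneg_of_le (fun _ => (Real.exp_pos _).le)
    (fun i => exp_neg_mul_le_rpow_mul_inv_rpow hκ ht (hx i)) (hsum.mul_left _)

theorem countable_of_summable_inv_rpow {x : ι → ℝ} (hx : ∀ i, 0 < x i)
    (hsum : Summable fun i => (x i)⁻¹ ^ κ) : Countable ι := by
  have hsupp : Function.support (fun i => (x i)⁻¹ ^ κ) = univ :=
    Function.support_eq_univ fun i => (Real.rpow_pos_of_pos (inv_pos.2 (hx i)) κ).ne'
  exact countable_univ_iff.1 (hsupp ▸ hsum.countable_support)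

theorem re_pos_of_abs_arg_lt {z : ℂ} (hz : z ≠ 0) (harg : |z.arg| < π / 2) : 0 < z.re :=
  (abs_arg_lt_pi_div_two_iff.1 harg).resolve_right hz

theorem cos_mul_norm_le_re {z : ℂ} {θ : ℝ} (hθ : θ ≤ π) (hz : |z.arg| ≤ θ) :
    Real.cos θ * ‖z‖ ≤ z.re := by
  rw [← norm_mul_cos_arg z, mul_comm, ← Real.cos_abs z.arg]
  gcongr
  exact Real.cos_le_cos_of_nonneg_of_le_pi (abs_nonneg _) hθ hz

theorem summable_inv_re_rpow_of_abs_arg_le {a : ι → ℂ} {θ : ℝ} (hθ : θ < π / 2)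
    (ha : ∀ i, a i ≠ 0) (harg : ∀ i, |(a i).arg| ≤ θ) (hκ : 0 ≤ κ)
    (hsum : Summable fun i => ‖a i‖⁻¹ ^ κ) : Summable fun i => (a i).re⁻¹ ^ κ := by
  have hre (i : ι) : 0 < (a i).re := re_pos_of_abs_arg_lt (ha i) ((harg i).trans_lt hθ)
  refine .of_nonneg_of_le (fun i => ?_) (fun i => ?_) (hsum.mul_left ((Real.cos θ)⁻¹ ^ κ))
  · exact Real.rpow_nonneg (inv_nonneg.2 (hre i).le) κ
  · have hnorm : 0 < ‖a i‖ := norm_pos_iff.2 (ha i)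
    have hcos : 0 < Real.cos θ :=
      Real.cos_pos_of_mem_Ioo ⟨by linarith [abs_nonneg (a i).arg, harg i, pi_pos], hθ⟩
    rw [← Real.mul_rpow (by positivity) (by positivity), ← mul_inv]
    gcongr
    · exact inv_nonneg.2 (hre i).le
    · exact cos_mul_norm_le_re (by linarith [pi_pos]) (harg i)

end Summability

theorem stmt_2_general {ι : Type*} {κ : ℝ} (hκ : 0 < κ) {a : ι → ℂ} (ha : ∀ i, 0 < (a i).re)
    (hsum : Summable fun i => (a i).re⁻¹ ^ κ) :
    (∀ t : ℝ, 0 < t → Summable fun i => ‖Complex.exp (-(t : ℂ) * a i)‖) ∧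
    ∀ s : ℂ, κ < s.re →
      IntegrableOn
        (fun t : ℝ => (t : ℂ) ^ (s - 1) * ∑' i, Complex.exp (-(t : ℂ) * a i))
        (Ioi (0 : ℝ)) ∧
      Complex.Gamma s * ∑' i, Complex.exp (-s * Complex.log (a i)) =
        ∫ t in Ioi (0 : ℝ), (t : ℂ) ^ (s - 1) * ∑' i, Complex.exp (-(t : ℂ) * a i) := by
  have : Countable ι := countable_of_summable_inv_rpow ha hsum
  refine ⟨fun t ht => ?_, fun s hs => ?_⟩
  · simpa only [norm_cexp_neg_mul] using summable_exp_neg_mul ha hκ.le hsum ht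
  · have hsum_s : Summable fun i => (a i).re⁻¹ ^ s.re :=
      summable_rpow_of_exponent_ge (fun i => inv_nonneg.2 (ha i).le) hκ hs.le hsum
    have hcpow (i : ι) : cexp (-s * Complex.log (a i)) = a i ^ (-s) := by
      rw [cpow_def_of_ne_zero (ne_zero_of_re_pos (ha i)), mul_comm]
    obtain ⟨hconv, hmellin⟩ := hasMellin_tsum_cexp_neg_mul (hκ.trans hs) ha hsum_s
    simp only [hcpow]
    exact ⟨hconv, hmellin.symm⟩

/-- For nonzero complex numbers `a n` with `|arg (a n)| ≤ π/2 - ε` and `∑ |a n|⁻¹ ^ k < ∞`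
(`k ≥ 1`), the theta series `Θ t = ∑ exp (-t * a n)` converges absolutely for all `t > 0`,
and for `Re s > k` one has `Γ s * ∑ (a n) ^ (-s) = ∫_0^∞ t ^ (s-1) * Θ t dt`,
the integral being absolutely convergent. Here `a ^ (-s) = exp (-s * Log a)`. -/
theorem stmt_2 (ε : ℝ) (hε0 : 0 < ε) (hεπ : ε < π / 2) (k : ℕ) (hk : 1 ≤ k)
    (a : ℕ → ℂ) (ha : ∀ n, a n ≠ 0) (harg : ∀ n, |(a n).arg| ≤ π / 2 - ε)
    (hsum : Summable fun n => ‖a n‖⁻¹ ^ k) :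
    (∀ t : ℝ, 0 < t → Summable fun n => ‖Complex.exp (-(t : ℂ) * a n)‖) ∧
    ∀ s : ℂ, (k : ℝ) < s.re →
      IntegrableOn
        (fun t : ℝ => (t : ℂ) ^ (s - 1) * ∑' n, Complex.exp (-(t : ℂ) * a n))
        (Ioi (0 : ℝ)) ∧
      Complex.Gamma s * ∑' n, Complex.exp (-s * Complex.log (a n)) =
        ∫ t in Ioi (0 : ℝ), (t : ℂ) ^ (s - 1) * ∑' n, Complex.exp (-(t : ℂ) * a n) := by
  have hθ : π / 2 - ε < π / 2 := sub_lt_self _ hε0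
  exact stmt_2_general (Nat.cast_pos.2 hk)
    (fun n => re_pos_of_abs_arg_lt (ha n) ((harg n).trans_lt hθ))
    (summable_inv_re_rpow_of_abs_arg_le hθ ha harg k.cast_nonneg
      (by simpa only [Real.rpow_natCast] using hsum))
end

section
/- Let (a_n)_{n∈ℕ} be a sequence of nonzero complex numbers, k a natural number such that ∑_n a_n^{−s} converges absolutely for every s with Re(s) > k, and let s₀ ∈ ℂ with Re(s₀) > 0 be such that for some ε′ > 0 one has |Im(s₀·Log a_n)| ≤ π − ε′ for all n (so that Log(a_n^{s₀}) = s₀·Log a_n for all n). Suppose F, G : ℂ → ℂ are meromorphic on all of ℂ and holomorphic at 0 with F(s) = ∑_n a_n^{−s} for Re(s) > k and G(s) = ∑_n (a_n^{s₀})^{−s} for Re(s) > k/Re(s₀). Then G(s) = F(s₀·s) wherever both sides are defined, and consequently exp(−G′(0)) = exp(−s₀·F′(0)); in other words, the regularized product of (a_n^{s₀}) is the s₀-th power of the regularized product of (a_n). -/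
open Complex Real Set

/-!
Where both series converge they agree term by term, because `(a ^ s₀) ^ (-s) = a ^ (-(s₀ * s))` as
soon as `s₀ * Log a` is the logarithm chosen for `a ^ s₀`. The half-planes `Re s > k / Re s₀` and
`Re (s₀ * s) > k` share a large real point `x`, so the meromorphic functions `G` and `F (s₀ * ·)`
agree near `x`, hence everywhere, and the chain rule at `0` gives `G' 0 = s₀ * F' 0`.
-/

open Filter Topology

section IdentityTheorem

variable {𝕜 E : Type*} [NontriviallyNormedField 𝕜] [NormedAddCommGroup E]
  [NormedSpace 𝕜 E] {f g : 𝕜 → E} {U : Set 𝕜} {z₀ z : 𝕜}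

theorem eventuallyEq_nhdsNE_of_meromorphicOn_of_isPreconnected (hf : MeromorphicOn f U)
    (hg : MeromorphicOn g U) (hU : IsPreconnected U) (hz₀ : z₀ ∈ U) (hz : z ∈ U)
    (h : f =ᶠ[𝓝[≠] z₀] g) : f =ᶠ[𝓝[≠] z] g := by
  rw [eventuallyEq_iff_sub] at h ⊢
  rw [EventuallyEq, Pi.zero_def, ← meromorphicOrderAt_eq_top_iff] at h ⊢
  by_contra order_ne_top
  exact (hf.sub hg).meromorphicOrderAt_ne_top_of_isPreconnected hU hz hz₀ order_ne_top h

theorem eventuallyEq_nhds_of_meromorphicOn_of_isPreconnected (hf : MeromorphicOn f U)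
    (hg : MeromorphicOn g U) (hU : IsPreconnected U) (hz₀ : z₀ ∈ U) (hz : z ∈ U)
    (h : f =ᶠ[𝓝[≠] z₀] g) (hfz : ContinuousAt f z) (hgz : ContinuousAt g z) : f =ᶠ[𝓝 z] g :=
  (hfz.eventuallyEq_nhds_iff_eventuallyEq_nhdsNE hgz).1 <|
    eventuallyEq_nhdsNE_of_meromorphicOn_of_isPreconnected hf hg hU hz₀ hz h

end IdentityTheorem

section Convergence

theorem norm_exp_neg_mul_le {w : ℂ} {B : ℝ} (hw : |w.im| ≤ B) (s : ℂ) :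
    ‖Complex.exp (-s * w)‖ ≤ Real.exp (|s.im| * B) * ‖Complex.exp (-(s.re : ℂ) * w)‖ := by
  have im_mul_im_le : s.im * w.im ≤ |s.im| * B :=
    calc s.im * w.im ≤ |s.im * w.im| := le_abs_self _
      _ = |s.im| * |w.im| := abs_mul _ _
      _ ≤ |s.im| * B := by gcongr
  rw [Complex.norm_exp, Complex.norm_exp, ← Real.exp_add, Real.exp_le_exp]
  simp only [neg_mul, Complex.neg_re, Complex.mul_re, Complex.ofReal_re, Complex.ofReal_im]
  linarith

theorem summable_norm_exp_neg_mul_const_mul {ι : Type*} {L : ι → ℂ} {s₀ s : ℂ} {k B : ℝ}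
    (hs₀ : 0 < s₀.re) (hL : ∀ i, |(s₀ * L i).im| ≤ B)
    (hsum : ∀ s : ℂ, k < s.re → Summable fun i ↦ ‖Complex.exp (-s * L i)‖)
    (hs : k / s₀.re < s.re) : Summable fun i ↦ ‖Complex.exp (-s * (s₀ * L i))‖ := by
  -- For non-real `s₀`, `Re s > k / Re s₀` does not give `Re (s₀ * s) > k`, so `hsum` may fail to
  -- apply at `s₀ * s`; it applies at `s₀ * Re s`, and the bound on `Im (s₀ * L i)` absorbs `Im s`.
  have summable_at_re : Summable fun i ↦ ‖Complex.exp (-(s.re : ℂ) * (s₀ * L i))‖ := by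
    have lt_re : k < ((s.re : ℂ) * s₀).re := by
      rwa [Complex.re_ofReal_mul, ← div_lt_iff₀ hs₀]
    simpa only [neg_mul, mul_assoc] using hsum _ lt_re
  exact .of_nonneg_of_le (fun _ ↦ norm_nonneg _) (fun i ↦ norm_exp_neg_mul_le (hL i) s)
    (summable_at_re.mul_left _)

end Convergence

/-- `F` is the zeta function `∑ᵢ aᵢ ^ (-s)` of a family `aᵢ = exp (L i)`, meromorphically continued
to `ℂ`. The family is encoded by the chosen logarithms `L i`, which determine the powers
`aᵢ ^ (-s) = exp (-s * L i)`. -/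
structure IsZetaContinuation {ι : Type*} (L : ι → ℂ) (F : ℂ → ℂ) : Prop where
  meromorphic : Meromorphic F
  exists_hasSum : ∃ k : ℝ, ∀ s : ℂ, k < s.re → HasSum (fun i ↦ Complex.exp (-s * L i)) (F s)

namespace IsZetaContinuation

variable {ι : Type*} {L : ι → ℂ} {s₀ : ℂ} {F G : ℂ → ℂ}

theorem exists_eventuallyEq_comp_mul (hF : IsZetaContinuation L F)
    (hG : IsZetaContinuation (fun i ↦ s₀ * L i) G) (hs₀ : 0 < s₀.re) :
    ∃ z, G =ᶠ[𝓝 z] fun s ↦ F (s₀ * s) := by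
  obtain ⟨k, hasSum_F⟩ := hF.exists_hasSum
  obtain ⟨l, hasSum_G⟩ := hG.exists_hasSum
  obtain ⟨x, hlx, hkx⟩ : ∃ x : ℝ, l < x ∧ k < s₀.re * x :=
    ((eventually_gt_atTop l).and
      ((tendsto_id.const_mul_atTop hs₀).eventually_gt_atTop k)).exists
  have near_G : ∀ᶠ s : ℂ in 𝓝 (x : ℂ), l < s.re :=
    continuous_re.continuousAt.eventually_const_lt (by simpa using hlx)
  have near_F : ∀ᶠ s : ℂ in 𝓝 (x : ℂ), k < (s₀ * s).re :=
    (show ContinuousAt (fun s : ℂ ↦ (s₀ * s).re) x by fun_prop).eventually_const_lt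
      (by simpa using hkx)
  refine ⟨x, ?_⟩
  filter_upwards [near_G, near_F] with s hls hks
  have term_eq (i : ι) : -s * (s₀ * L i) = -(s₀ * s) * L i := by ring
  have hasSum_G_s := hasSum_G s hls
  simp only [term_eq] at hasSum_G_s
  exact hasSum_G_s.unique (hasSum_F _ hks)

theorem eventuallyEq_comp_mul (hF : IsZetaContinuation L F)
    (hG : IsZetaContinuation (fun i ↦ s₀ * L i) G) (hs₀ : 0 < s₀.re) {s : ℂ}
    (hGs : ContinuousAt G s) (hFs : ContinuousAt F (s₀ * s)) :
    G =ᶠ[𝓝 s] fun z ↦ F (s₀ * z) := by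
  obtain ⟨z, near_z⟩ := hF.exists_eventuallyEq_comp_mul hG hs₀
  have meromorphic_comp : Meromorphic fun z ↦ F (s₀ * z) := fun z ↦
    (hF.meromorphic (s₀ * z)).comp_analyticAt (g := fun z ↦ s₀ * z) (by fun_prop)
  exact eventuallyEq_nhds_of_meromorphicOn_of_isPreconnected (meromorphicOn_univ.2 hG.meromorphic)
    (meromorphicOn_univ.2 meromorphic_comp) isPreconnected_univ (mem_univ z) (mem_univ s)
    (near_z.filter_mono nhdsWithin_le_nhds) hGs (hFs.comp' (by fun_prop))

theorem deriv_zero_eq_mul (hF : IsZetaContinuation L F)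
    (hG : IsZetaContinuation (fun i ↦ s₀ * L i) G) (hs₀ : 0 < s₀.re)
    (hG0 : ContinuousAt G 0) (hF0 : ContinuousAt F 0) : deriv G 0 = s₀ * deriv F 0 := by
  have near_zero : G =ᶠ[𝓝 0] fun z ↦ F (s₀ * z) :=
    hF.eventuallyEq_comp_mul hG hs₀ hG0 (by rwa [mul_zero])
  rw [near_zero.deriv_eq, deriv_comp_mul_left, mul_zero, smul_eq_mul]

end IsZetaContinuation

theorem stmt_7_general {ι : Type*} {L : ι → ℂ} {s₀ : ℂ} (hs₀ : 0 < s₀.re) {F G : ℂ → ℂ}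
    (hF : IsZetaContinuation L F) (hG : IsZetaContinuation (fun i ↦ s₀ * L i) G)
    (hF0 : AnalyticAt ℂ F 0) (hG0 : AnalyticAt ℂ G 0) :
    (∀ s : ℂ, AnalyticAt ℂ G s → AnalyticAt ℂ F (s₀ * s) → G s = F (s₀ * s)) ∧
      Complex.exp (-deriv G 0) = Complex.exp (-s₀ * deriv F 0) := by
  refine ⟨fun s hGs hFs ↦
    (hF.eventuallyEq_comp_mul hG hs₀ hGs.continuousAt hFs.continuousAt).eq_of_nhds, ?_⟩
  rw [hF.deriv_zero_eq_mul hG hs₀ hG0.continuousAt hF0.continuousAt, neg_mul]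

/-- Power rule for regularized products: let `s₀` with `Re s₀ > 0` be such that
`|Im (s₀ * Log (a n))| ≤ π - ε'` for all `n` (so `Log ((a n) ^ s₀) = s₀ * Log (a n)`).
If `F` and `G` are meromorphic on `ℂ`, holomorphic at `0`, with `F s = ∑ (a n) ^ (-s)`
for `Re s > k` and `G s = ∑ ((a n) ^ s₀) ^ (-s)` for `Re s > k / Re s₀`, then
`G s = F (s₀ * s)` wherever both sides are defined, and
`exp (-G' 0) = exp (-s₀ * F' 0)`. Here `a ^ (-s) = exp (-s * Log a)` and
`(a n) ^ s₀ = exp (s₀ * Log (a n))`. -/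
theorem stmt_7 (a : ℕ → ℂ) (ha : ∀ n, a n ≠ 0) (k : ℕ)
    (hsum : ∀ s : ℂ, (k : ℝ) < s.re →
      Summable fun n => ‖Complex.exp (-s * Complex.log (a n))‖)
    (s₀ : ℂ) (hs₀ : 0 < s₀.re) (ε' : ℝ) (hε' : 0 < ε')
    (harg : ∀ n, |(s₀ * Complex.log (a n)).im| ≤ π - ε')
    (F G : ℂ → ℂ)
    (hF : MeromorphicOn F Set.univ) (hF0 : AnalyticAt ℂ F 0)
    (hG : MeromorphicOn G Set.univ) (hG0 : AnalyticAt ℂ G 0)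
    (hFeq : ∀ s : ℂ, (k : ℝ) < s.re →
      F s = ∑' n : ℕ, Complex.exp (-s * Complex.log (a n)))
    (hGeq : ∀ s : ℂ, (k : ℝ) / s₀.re < s.re →
      G s = ∑' n : ℕ,
        Complex.exp (-s * Complex.log (Complex.exp (s₀ * Complex.log (a n))))) :
    (∀ s : ℂ, AnalyticAt ℂ G s → AnalyticAt ℂ F (s₀ * s) → G s = F (s₀ * s)) ∧
    Complex.exp (-deriv G 0) = Complex.exp (-s₀ * deriv F 0) := by
  have log_pow (n : ℕ) : Complex.log (Complex.exp (s₀ * Complex.log (a n))) =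
      s₀ * Complex.log (a n) := by
    obtain ⟨neg_le_im, im_le⟩ := abs_le.1 (harg n)
    exact Complex.log_exp (by linarith) (by linarith)
  have hF_zeta : IsZetaContinuation (fun n ↦ Complex.log (a n)) F :=
    ⟨meromorphicOn_univ.1 hF, k, fun s hs ↦ hFeq s hs ▸ (hsum s hs).of_norm.hasSum⟩
  have hG_zeta : IsZetaContinuation (fun n ↦ s₀ * Complex.log (a n)) G := by
    refine ⟨meromorphicOn_univ.1 hG, k / s₀.re, fun s hs ↦ ?_⟩
    simp only [hGeq s hs, log_pow]
    exact (summable_norm_exp_neg_mul_const_mul hs₀ harg hsum hs).of_norm.hasSum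
  exact stmt_7_general hs₀ hF_zeta hG_zeta hF0 hG0
end

section
/- Let (a_n)_{n∈ℕ} be a sequence of nonzero complex numbers with Re(a_n) ≥ 0 for all n and ∑_n |a_n|^{−k} < ∞ for some natural number k. Fix s ∈ ℂ with Re(s) > k. Then for every λ ∈ ℂ with Re(λ) > 0 the series ∑_n (a_n + λ)^{−s} and ∑_n (a_n + λ)^{−s−1} converge absolutely, and the function λ ↦ ∑_n (a_n + λ)^{−s} is complex differentiable on {Re(λ) > 0} with derivative at λ equal to −s · ∑_n (a_n + λ)^{−s−1}. -/
open Complex Real Set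

/-!
If `μ` stays bounded and `Re (a i + μ) ≥ d > 0`, then `‖a i + μ‖` is at least `d` and dominates a
fixed multiple of `‖a i‖`, while the argument contributes only a bounded factor to
`‖(a i + μ) ^ w‖`. Hence for `0 ≤ r ≤ -Re w` the terms are dominated by a multiple of
`‖a i‖ ^ (-r)`, uniformly in `μ`, and the series of holomorphic functions may be differentiated
term by term.
-/

lemma norm_le_mul_norm_add_of_le {E : Type*} [SeminormedAddGroup E] {a m : E} {d M : ℝ}
    (hd : 0 < d) (hdist : d ≤ ‖a + m‖) (hm : ‖m‖ ≤ M) : ‖a‖ ≤ (1 + M / d) * ‖a + m‖ := by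
  have hM : 0 ≤ M := (norm_nonneg m).trans hm
  calc ‖a‖ ≤ ‖a + m‖ + ‖m‖ := norm_le_add_norm_add a m
    _ ≤ ‖a + m‖ + M / d * d := by rwa [div_mul_cancel₀ M hd.ne', add_le_add_iff_left]
    _ ≤ ‖a + m‖ + M / d * ‖a + m‖ := by gcongr
    _ = (1 + M / d) * ‖a + m‖ := by ring

lemma rpow_le_mul_rpow_neg_of_le_mul {x y d C r t : ℝ} (hy : 0 < y) (hd : 0 < d) (hC : 0 < C)
    (hdx : d ≤ x) (hyx : y ≤ C * x) (hr : 0 ≤ r) (ht : t ≤ -r) :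
    x ^ t ≤ d ^ (t + r) * C ^ r * y ^ (-r) := by
  have hx : 0 < x := hd.trans_le hdx
  have hlower : y / C ≤ x := (div_le_iff₀' hC).mpr hyx
  calc x ^ t = x ^ (t + r) * x ^ (-r) := by rw [← Real.rpow_add hx, add_neg_cancel_right]
    _ ≤ d ^ (t + r) * (y / C) ^ (-r) := mul_le_mul
        (Real.rpow_le_rpow_of_nonpos hd hdx (by linarith))
        (Real.rpow_le_rpow_of_nonpos (div_pos hy hC) hlower (by linarith))
        (by positivity) (by positivity)
    _ = d ^ (t + r) * C ^ r * y ^ (-r) := by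
        rw [Real.div_rpow hy.le hC.le, Real.rpow_neg hC.le, div_inv_eq_mul]
        ring

lemma norm_cpow_le_exp_mul_norm_rpow (z w : ℂ) :
    ‖z ^ w‖ ≤ Real.exp (π * |w.im|) * ‖z‖ ^ w.re := by
  have harg : -(z.arg * w.im) ≤ π * |w.im| :=
    calc -(z.arg * w.im) ≤ |z.arg * w.im| := neg_le_abs _
      _ = |z.arg| * |w.im| := abs_mul _ _
      _ ≤ π * |w.im| := by gcongr; exact Complex.abs_arg_le_pi z
  calc ‖z ^ w‖ ≤ ‖z‖ ^ w.re / Real.exp (z.arg * w.im) := Complex.norm_cpow_le z w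
    _ = Real.exp (-(z.arg * w.im)) * ‖z‖ ^ w.re := by rw [Real.exp_neg, div_eq_inv_mul]
    _ ≤ Real.exp (π * |w.im|) * ‖z‖ ^ w.re := by gcongr

lemma norm_add_cpow_le {a m w : ℂ} {d M r : ℝ} (ha : a ≠ 0) (hd : 0 < d) (hdist : d ≤ ‖a + m‖)
    (hm : ‖m‖ ≤ M) (hr : 0 ≤ r) (hw : w.re ≤ -r) :
    ‖(a + m) ^ w‖ ≤
      Real.exp (π * |w.im|) * (d ^ (w.re + r) * (1 + M / d) ^ r) * ‖a‖ ^ (-r) := by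
  have hM : 0 ≤ M := (norm_nonneg m).trans hm
  rw [mul_assoc]
  exact (norm_cpow_le_exp_mul_norm_rpow _ w).trans <| mul_le_mul_of_nonneg_left
    (rpow_le_mul_rpow_neg_of_le_mul (norm_pos_iff.mpr ha) hd (by positivity) hdist
      (norm_le_mul_norm_add_of_le hd hdist hm) hr hw) (Real.exp_nonneg _)

lemma hasDerivAt_const_add_cpow {a l : ℂ} (w : ℂ) (h : a + l ∈ slitPlane) :
    HasDerivAt (fun μ ↦ (a + μ) ^ w) (w * (a + l) ^ (w - 1)) l := by
  simpa only [id_eq, mul_one] using ((hasDerivAt_id l).const_add a).cpow_const (c := w) h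

section Series

variable {ι : Type*} {a : ι → ℂ} {r : ℝ} {w l : ℂ}

lemma summable_norm_add_cpow {d : ℝ} (ha : ∀ i, a i ≠ 0) (hr : 0 ≤ r)
    (hsum : Summable fun i ↦ ‖a i‖ ^ (-r)) (hw : w.re ≤ -r) (hd : 0 < d)
    (hdist : ∀ i, d ≤ ‖a i + l‖) : Summable fun i ↦ ‖(a i + l) ^ w‖ :=
  (hsum.mul_left _).of_nonneg_of_le (fun _ ↦ norm_nonneg _) fun i ↦
    norm_add_cpow_le (ha i) hd (hdist i) le_rfl hr hw

lemma hasDerivAt_tsum_add_cpow {c : ℝ} (ha : ∀ i, a i ≠ 0) (hre : ∀ i, c ≤ (a i).re)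
    (hr : 0 ≤ r) (hsum : Summable fun i ↦ ‖a i‖ ^ (-r)) (hw : w.re ≤ -r) (hl : -c < l.re) :
    HasDerivAt (fun μ ↦ ∑' i, (a i + μ) ^ w) (w * ∑' i, (a i + l) ^ (w - 1)) l := by
  obtain ⟨b, hcb, hbl⟩ := exists_between hl
  let U : Set ℂ := {μ | b < μ.re} ∩ Metric.ball 0 (‖l‖ + 1)
  have hU : IsOpen U := (isOpen_re_gt b).inter Metric.isOpen_ball
  have hlU : l ∈ U := ⟨hbl, by simp⟩
  have hre_add (i : ι) {μ : ℂ} (hμ : μ ∈ U) : c + b ≤ (a i + μ).re :=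
    add_le_add (hre i) hμ.1.le
  have hderiv (i : ι) {μ : ℂ} (hμ : μ ∈ U) :
      HasDerivAt (fun μ ↦ (a i + μ) ^ w) (w * (a i + μ) ^ (w - 1)) μ :=
    hasDerivAt_const_add_cpow w <| .inl <| by linarith [hre_add i hμ]
  have hdiff (i : ι) : DifferentiableOn ℂ (fun μ ↦ (a i + μ) ^ w) U := fun μ hμ ↦
    (hderiv i hμ).differentiableAt.differentiableWithinAt
  have hbound (i : ι) (μ : ℂ) (hμ : μ ∈ U) := norm_add_cpow_le (ha i) (neg_lt_iff_pos_add'.mp hcb)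
    ((hre_add i hμ).trans (re_le_norm _)) (mem_ball_zero_iff.mp hμ.2).le hr hw
  have hmajorant := hsum.mul_left
    (Real.exp (π * |w.im|) * ((c + b) ^ (w.re + r) * (1 + (‖l‖ + 1) / (c + b)) ^ r))
  have hderiv_tsum := (hasSum_deriv_of_summable_norm hmajorant hdiff hU hbound hlU).tsum_eq
  rw [← tsum_mul_left, ← tsum_congr fun i ↦ (hderiv i hlU).deriv, hderiv_tsum]
  exact ((differentiableOn_tsum_of_summable_norm hmajorant hdiff hU hbound).differentiableAt
    (hU.mem_nhds hlU)).hasDerivAt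

theorem stmt_8_general {c : ℝ} (ha : ∀ i, a i ≠ 0) (hre : ∀ i, c ≤ (a i).re) (hr : 0 ≤ r)
    (hsum : Summable fun i ↦ ‖a i‖ ^ (-r)) {s : ℂ} (hs : r ≤ s.re) (hl : -c < l.re) :
    (Summable fun i ↦ ‖Complex.exp (-s * Complex.log (a i + l))‖) ∧
    (Summable fun i ↦ ‖Complex.exp (-(s + 1) * Complex.log (a i + l))‖) ∧
    HasDerivAt (fun μ : ℂ ↦ ∑' i, Complex.exp (-s * Complex.log (a i + μ)))
      (-s * ∑' i, Complex.exp (-(s + 1) * Complex.log (a i + l))) l := by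
  have hexp (t : ℂ) (i : ι) {μ : ℂ} (hμ : -c < μ.re) :
      Complex.exp (t * Complex.log (a i + μ)) = (a i + μ) ^ t := by
    have hne : a i + μ ≠ 0 := ne_zero_of_re_pos (by rw [add_re]; linarith [hre i])
    rw [cpow_def_of_ne_zero hne, mul_comm]
  have hdist (i : ι) : c + l.re ≤ ‖a i + l‖ :=
    (add_le_add_left (hre i) l.re).trans (re_le_norm (a i + l))
  have hw : (-s).re ≤ -r := neg_le_neg hs
  have hw' : (-(s + 1)).re ≤ -r := by simp only [neg_re, add_re, one_re]; linarith
  have hd : 0 < c + l.re := neg_lt_iff_pos_add'.mp hl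
  simp only [hexp _ _ hl]
  refine ⟨summable_norm_add_cpow ha hr hsum hw hd hdist,
    summable_norm_add_cpow ha hr hsum hw' hd hdist, ?_⟩
  rw [neg_add']
  refine (hasDerivAt_tsum_add_cpow ha hre hr hsum hw hl).congr_of_eventuallyEq ?_
  filter_upwards [(isOpen_re_gt (-c)).mem_nhds hl] with μ hμ
  exact tsum_congr fun i ↦ hexp (-s) i hμ

end Series

/-- For a sequence of nonzero complex numbers with `Re (a n) ≥ 0` and `∑ |a n|⁻¹ ^ k < ∞`,
and a fixed `s` with `Re s > k`, the series `∑ (a n + λ) ^ (-s)` and `∑ (a n + λ) ^ (-s-1)`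
converge absolutely for `Re λ > 0`, and `λ ↦ ∑ (a n + λ) ^ (-s)` is complex differentiable
there with derivative `-s * ∑ (a n + λ) ^ (-s-1)`. Here `a ^ (-s) = exp (-s * Log a)`. -/
theorem stmt_8 (a : ℕ → ℂ) (ha : ∀ n, a n ≠ 0) (hre : ∀ n, 0 ≤ (a n).re)
    (k : ℕ) (hsum : Summable fun n => ‖a n‖⁻¹ ^ k)
    (s : ℂ) (hs : (k : ℝ) < s.re) :
    ∀ l : ℂ, 0 < l.re →
      (Summable fun n => ‖Complex.exp (-s * Complex.log (a n + l))‖) ∧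
      (Summable fun n => ‖Complex.exp (-(s + 1) * Complex.log (a n + l))‖) ∧
      HasDerivAt (fun μ : ℂ => ∑' n, Complex.exp (-s * Complex.log (a n + μ)))
        (-s * ∑' n, Complex.exp (-(s + 1) * Complex.log (a n + l))) l := by
  exact fun l hl ↦ stmt_8_general ha hre k.cast_nonneg
    (by simpa only [Real.rpow_neg (norm_nonneg _), Real.rpow_natCast, inv_pow] using hsum) hs.le
    (by rwa [neg_zero])
end

section
/- Let x > 0 be a real number and let α be a complex number that is not a nonpositive integer (α ∉ {0, −1, −2, …}). Then the series ∑_{n=0}^∞ (−x)^n / (n!·(n + α)) converges absolutely, the integral ∫₁^∞ t^{α−1} e^{−xt} dt converges absolutely, and ∑_{n=0}^∞ (−x)^n / (n!·(n + α)) + ∫₁^∞ t^{α−1} e^{−xt} dt = x^{−α} · Γ(α), where x^{−α} = exp(−α·log x). -/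
open Complex Real MeasureTheory Set

/-!
For `0 < Re α`, expanding the exponential in `∫₀¹ t^(α-1) e^(-xt) dt` and integrating termwise gives
the series, so the left-hand side is Euler's integral for `x^(-α) Γ(α)`. If `L(α)` denotes the
series and `U(α)` the integral over `(1, ∞)`, then `α L(α) = x L(α+1) + e^(-x)` by shifting the
index and `α U(α) = x U(α+1) - e^(-x)` by parts. The exponentials cancel in the sum, so that
`L(α) + U(α)` obeys the functional equation of `x^(-α) Γ(α)`, and the identity descends from
`α + 1` to `α`.
-/

open Filter Topology
open scoped Nat

/-- The series `∑ (-z)^n / (n! (n + α))`, which is the lower incomplete Gamma function `γ(α, z)`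
normalised as `z^(-α) γ(α, z)` so as to be entire in `z`. If `α` is a nonpositive integer, the term
at the pole is `0` because division by zero is. -/
noncomputable def lowerGammaSeries (z α : ℂ) : ℂ :=
  ∑' n : ℕ, (-z) ^ n / ((n ! : ℂ) * (n + α))

/-- The integral `∫₁^∞ t^(α-1) e^(-zt) dt`, which for `0 < Re z` is the upper incomplete Gamma
function `Γ(α, z)` normalised as `z^(-α) Γ(α, z)`. -/
noncomputable def upperGammaIntegral (z α : ℂ) : ℂ :=
  ∫ t in Ioi (1 : ℝ), (t : ℂ) ^ (α - 1) * Complex.exp (-z * t)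

lemma hasSum_pow_div_factorial_exp (z : ℂ) :
    HasSum (fun n : ℕ => z ^ n / (n ! : ℂ)) (Complex.exp z) := by
  simpa only [Complex.exp_eq_exp_ℂ] using NormedSpace.expSeries_div_hasSum_exp z

lemma summable_norm_pow_div_factorial_mul_add (z α : ℂ) :
    Summable fun n : ℕ => ‖z ^ n / ((n ! : ℂ) * (n + α))‖ := by
  refine (NormedSpace.norm_expSeries_div_summable z).of_norm_bounded_eventually_nat ?_
  filter_upwards [eventually_ge_atTop ⌈1 + ‖α‖⌉₊] with n hn
  have one_le_norm : 1 ≤ ‖(n : ℂ) + α‖ := by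
    have := norm_sub_le_norm_add (n : ℂ) α
    rw [Complex.norm_natCast] at this
    linarith [Nat.ceil_le.mp hn]
  rw [norm_norm, ← div_div, norm_div]
  exact div_le_self (norm_nonneg _) one_le_norm

lemma hasSum_lowerGammaSeries (z α : ℂ) :
    HasSum (fun n : ℕ => (-z) ^ n / ((n ! : ℂ) * (n + α))) (lowerGammaSeries z α) :=
  (summable_norm_pow_div_factorial_mul_add (-z) α).of_norm.hasSum

lemma hasSum_natCast_mul_lowerGammaSeries_term (z α : ℂ) :
    HasSum (fun n : ℕ => (n : ℂ) * ((-z) ^ n / ((n ! : ℂ) * (n + α))))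
      (-z * lowerGammaSeries z (α + 1)) := by
  have hshift (n : ℕ) :
      ((n + 1 : ℕ) : ℂ) * ((-z) ^ (n + 1) / (((n + 1)! : ℂ) * ((n + 1 : ℕ) + α))) =
        -z * ((-z) ^ n / ((n ! : ℂ) * (n + (α + 1)))) := by
    have hn : ((n + 1 : ℕ) : ℂ) ≠ 0 := Nat.cast_ne_zero.mpr n.succ_ne_zero
    rw [Nat.factorial_succ, Nat.cast_mul, mul_assoc, ← mul_div_assoc, mul_div_mul_left _ _ hn,
      pow_succ', mul_div_assoc, Nat.cast_succ, add_right_comm, add_assoc]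
  refine (hasSum_nat_add_iff' 1).mp ?_
  simp only [Finset.sum_range_one, Nat.cast_zero, zero_mul, sub_zero]
  exact ((hasSum_lowerGammaSeries z (α + 1)).mul_left (-z)).congr_fun hshift

lemma mul_lowerGammaSeries (z : ℂ) {α : ℂ} (hα : ∀ n : ℕ, α ≠ -n) :
    α * lowerGammaSeries z α = z * lowerGammaSeries z (α + 1) + Complex.exp (-z) := by
  have hsplit (n : ℕ) : α * ((-z) ^ n / ((n ! : ℂ) * (n + α))) =
      (-z) ^ n / (n ! : ℂ) - n * ((-z) ^ n / ((n ! : ℂ) * (n + α))) := by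
    have hn : (n : ℂ) + α ≠ 0 := fun h => hα n (eq_neg_of_add_eq_zero_right h)
    have := Nat.cast_ne_zero (R := ℂ).mpr n.factorial_ne_zero
    field_simp
    ring
  have hsum := ((hasSum_pow_div_factorial_exp (-z)).sub
    (hasSum_natCast_mul_lowerGammaSeries_term z α)).congr_fun hsplit
  linear_combination ((hasSum_lowerGammaSeries z α).mul_left α).unique hsum

lemma hasSum_ofReal_cpow_mul_exp (s z : ℂ) {t : ℝ} (ht : 0 < t) :
    HasSum (fun n : ℕ => z ^ n / (n ! : ℂ) * (t : ℂ) ^ (n + s))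
      ((t : ℂ) ^ s * Complex.exp (z * t)) := by
  refine ((hasSum_pow_div_factorial_exp (z * t)).mul_left _).congr_fun fun n => ?_
  rw [Complex.cpow_add _ _ (ofReal_ne_zero.mpr ht.ne'), Complex.cpow_natCast, mul_pow]
  ring

lemma integral_ofReal_cpow_natCast_add {s : ℂ} (hs : -1 < s.re) (n : ℕ) :
    ∫ t in (0 : ℝ)..1, (t : ℂ) ^ (n + s) = 1 / (n + (s + 1)) := by
  have hre : -1 < (n + s).re := by
    simpa using lt_add_of_nonneg_of_lt (n.cast_nonneg (α := ℝ)) hs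
  have hne : (n : ℂ) + s + 1 ≠ 0 := fun h => by
    have := congrArg Complex.re h
    simp only [add_re, one_re, zero_re] at this hre
    linarith
  rw [integral_cpow (Or.inl hre), ← add_assoc]
  simp [hne]

lemma norm_ofReal_cpow_natCast_add_le (s : ℂ) (n : ℕ) {t : ℝ} (ht : t ∈ Ioc 0 1) :
    ‖(t : ℂ) ^ (n + s)‖ ≤ t ^ s.re := by
  rw [Complex.norm_cpow_eq_rpow_re_of_pos ht.1]
  exact Real.rpow_le_rpow_of_exponent_ge ht.1 ht.2 (by simp)

lemma lowerGammaSeries_eq_integral (z : ℂ) {α : ℂ} (hα : 0 < α.re) :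
    lowerGammaSeries z α = ∫ t in (0 : ℝ)..1, (t : ℂ) ^ (α - 1) * Complex.exp (-z * t) := by
  have hre : -1 < (α - 1).re := by simpa using hα
  have hIoc : uIoc (0 : ℝ) 1 = Ioc 0 1 := uIoc_of_le zero_le_one
  have hsum := intervalIntegral.hasSum_integral_of_dominated_convergence (μ := volume)
    (a := 0) (b := 1) (F := fun n t => (-z) ^ n / (n ! : ℂ) * (t : ℂ) ^ (n + (α - 1)))
    (f := fun t => (t : ℂ) ^ (α - 1) * Complex.exp (-z * t))
    (fun n t => ‖(-z) ^ n / (n ! : ℂ)‖ * t ^ (α - 1).re)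
    (fun n => Measurable.aestronglyMeasurable (by fun_prop)) ?_ ?_ ?_ ?_
  · refine (hasSum_lowerGammaSeries z α).unique (hsum.congr_fun fun n => ?_)
    rw [intervalIntegral.integral_const_mul, integral_ofReal_cpow_natCast_add hre,
      sub_add_cancel, div_mul_div_comm, mul_one]
  · refine fun n => .of_forall fun t ht => ?_
    rw [norm_mul]
    gcongr
    exact norm_ofReal_cpow_natCast_add_le _ n (hIoc ▸ ht)
  · exact .of_forall fun t _ => (NormedSpace.norm_expSeries_div_summable (-z)).mul_right _
  · simp only [tsum_mul_right]
    exact (intervalIntegral.intervalIntegrable_rpow' hre).const_mul _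
  · exact .of_forall fun t ht => hasSum_ofReal_cpow_mul_exp (α - 1) (-z) (hIoc ▸ ht).1

lemma norm_ofReal_cpow_mul_exp (s z : ℂ) {t : ℝ} (ht : 0 < t) :
    ‖(t : ℂ) ^ s * Complex.exp (z * t)‖ = t ^ s.re * Real.exp (z.re * t) := by
  simp [Complex.norm_cpow_eq_rpow_re_of_pos ht, Complex.norm_exp]

section UpperGammaIntegral

variable {z : ℂ}

lemma integrableOn_cpow_mul_exp_neg_mul_Ioi_zero {s : ℂ} (hs : -1 < s.re) (hz : 0 < z.re) :
    IntegrableOn (fun t : ℝ => (t : ℂ) ^ s * Complex.exp (-z * t)) (Ioi 0) := by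
  have hreal : IntegrableOn (fun t : ℝ => t ^ s.re * Real.exp (-z.re * t)) (Ioi 0) := by
    simpa using integrableOn_rpow_mul_exp_neg_mul_rpow hs one_pos hz
  refine hreal.mono' (by fun_prop) ((ae_restrict_mem measurableSet_Ioi).mono fun t ht => ?_)
  rw [norm_ofReal_cpow_mul_exp s (-z) ht, neg_re]

lemma integrableOn_cpow_mul_exp_neg_mul_Ioi_one (s : ℂ) (hz : 0 < z.re) :
    IntegrableOn (fun t : ℝ => (t : ℂ) ^ s * Complex.exp (-z * t)) (Ioi 1) := by
  -- On `t ≥ 1` the exponent may be raised to `|Re s|`, which is integrable down to `0` as well.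
  have hdom : IntegrableOn (fun t : ℝ => (t : ℂ) ^ ((|s.re| : ℝ) : ℂ) * Complex.exp (-z * t))
      (Ioi 1) :=
    (integrableOn_cpow_mul_exp_neg_mul_Ioi_zero
      (by simpa using neg_one_lt_zero.trans_le (abs_nonneg s.re)) hz).mono_set
      (Ioi_subset_Ioi zero_le_one)
  refine Integrable.mono hdom (by fun_prop) <|
    (ae_restrict_mem measurableSet_Ioi).mono fun t ht => ?_
  have ht0 : 0 < t := one_pos.trans ht
  rw [norm_ofReal_cpow_mul_exp _ _ ht0, norm_ofReal_cpow_mul_exp _ _ ht0, ofReal_re]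
  exact mul_le_mul_of_nonneg_right
    (Real.rpow_le_rpow_of_exponent_le ht.le (le_abs_self _)) (Real.exp_pos _).le

lemma hasDerivAt_ofReal_cpow_mul_exp (s z : ℂ) {t : ℝ} (ht : 0 < t) :
    HasDerivAt (fun t : ℝ => (t : ℂ) ^ s * Complex.exp (z * t))
      (s * ((t : ℂ) ^ (s - 1) * Complex.exp (z * t)) +
        z * ((t : ℂ) ^ s * Complex.exp (z * t))) t := by
  have hpow := ((hasDerivAt_id (t : ℂ)).cpow_const (c := s) (ofReal_mem_slitPlane.mpr ht))
  have hexp := ((hasDerivAt_id (t : ℂ)).const_mul z).cexp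
  refine (hpow.mul hexp).comp_ofReal.congr_deriv ?_
  simp only [id]
  ring

lemma tendsto_ofReal_cpow_mul_exp_neg_mul_atTop (s : ℂ) (hz : 0 < z.re) :
    Tendsto (fun t : ℝ => (t : ℂ) ^ s * Complex.exp (-z * t)) atTop (𝓝 0) := by
  refine tendsto_zero_iff_norm_tendsto_zero.mpr <|
    (tendsto_rpow_mul_exp_neg_mul_atTop_nhds_zero s.re z.re hz).congr' ?_
  filter_upwards [eventually_gt_atTop 0] with t ht
  rw [norm_ofReal_cpow_mul_exp s (-z) ht, neg_re]

lemma mul_upperGammaIntegral (hz : 0 < z.re) (α : ℂ) :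
    α * upperGammaIntegral z α = z * upperGammaIntegral z (α + 1) - Complex.exp (-z) := by
  have hint₁ := (integrableOn_cpow_mul_exp_neg_mul_Ioi_one (α - 1) hz).const_mul α
  have hint₂ := (integrableOn_cpow_mul_exp_neg_mul_Ioi_one α hz).const_mul (-z)
  have hparts := integral_Ioi_of_hasDerivAt_of_tendsto'
    (fun t ht => hasDerivAt_ofReal_cpow_mul_exp α (-z) (one_pos.trans_le ht))
    (hint₁.add hint₂) (tendsto_ofReal_cpow_mul_exp_neg_mul_atTop α hz)
  rw [integral_add hint₁ hint₂, integral_const_mul, integral_const_mul] at hparts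
  simp only [ofReal_one, one_cpow, one_mul, mul_one] at hparts
  rw [upperGammaIntegral, upperGammaIntegral, add_sub_cancel_right]
  linear_combination hparts

end UpperGammaIntegral

lemma lowerGammaSeries_add_upperGammaIntegral_of_add_one {z α : ℂ} (hz : 0 < z.re)
    (hα : ∀ n : ℕ, α ≠ -n)
    (h : lowerGammaSeries z (α + 1) + upperGammaIntegral z (α + 1) =
      z ^ (-(α + 1)) * Complex.Gamma (α + 1)) :
    lowerGammaSeries z α + upperGammaIntegral z α = z ^ (-α) * Complex.Gamma α := by
  have hz0 : z ≠ 0 := fun h => by simp [h] at hz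
  have hα0 : α ≠ 0 := by simpa using hα 0
  have hpow : z * z ^ (-(α + 1)) = z ^ (-α) := by
    rw [neg_add', Complex.cpow_sub _ _ hz0, Complex.cpow_one, mul_div_cancel₀ _ hz0]
  rw [Complex.Gamma_add_one α hα0] at h
  refine mul_left_cancel₀ hα0 ?_
  linear_combination mul_lowerGammaSeries z hα + mul_upperGammaIntegral hz α + z * h +
    α * Complex.Gamma α * hpow

lemma lowerGammaSeries_add_upperGammaIntegral_of_re_pos {x : ℝ} (hx : 0 < x) {α : ℂ}
    (hα : 0 < α.re) :
    lowerGammaSeries x α + upperGammaIntegral x α = (x : ℂ) ^ (-α) * Complex.Gamma α := by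
  have hx_re : 0 < (x : ℂ).re := hx
  have hinv : (1 / (x : ℂ)) ^ α = (x : ℂ) ^ (-α) := by
    rw [one_div, Complex.inv_cpow _ _ (slitPlane_arg_ne_pi (.inl hx_re)), Complex.cpow_neg]
  rw [lowerGammaSeries_eq_integral _ hα, upperGammaIntegral,
    intervalIntegral.integral_interval_add_Ioi
      (integrableOn_cpow_mul_exp_neg_mul_Ioi_zero (by simpa using hα) hx_re)
      (integrableOn_cpow_mul_exp_neg_mul_Ioi_one _ hx_re),
    ← hinv, ← Complex.integral_cpow_mul_exp_neg_mul_Ioi hα hx]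
  simp only [neg_mul]

lemma lowerGammaSeries_add_upperGammaIntegral {x : ℝ} (hx : 0 < x) {α : ℂ}
    (hα : ∀ n : ℕ, α ≠ -n) :
    lowerGammaSeries x α + upperGammaIntegral x α = (x : ℂ) ^ (-α) * Complex.Gamma α := by
  obtain ⟨k, hk⟩ := exists_nat_gt (-α.re)
  induction k generalizing α with
  | zero => exact lowerGammaSeries_add_upperGammaIntegral_of_re_pos hx (by simpa using hk)
  | succ k ih =>
    refine lowerGammaSeries_add_upperGammaIntegral_of_add_one hx hα (ih (fun n h => ?_) ?_)
    · exact hα (n + 1) (by push_cast; linear_combination h)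
    · simp only [add_re, one_re]
      push_cast at hk
      linarith

/-- For real `x > 0` and `α ∈ ℂ` not a nonpositive integer,
`∑_{n≥0} (-x)^n / (n! (n + α)) + ∫_1^∞ t^(α-1) e^(-xt) dt = x^(-α) Γ(α)`,
the series converging absolutely and the integral being absolutely convergent. -/
theorem stmt_11 (x : ℝ) (hx : 0 < x) (α : ℂ) (hα : ¬ ∃ m : ℕ, α = -(m : ℂ)) :
    (Summable fun n : ℕ => ‖(-(x : ℂ)) ^ n / ((Nat.factorial n : ℂ) * ((n : ℂ) + α))‖) ∧
    IntegrableOn (fun t : ℝ => (t : ℂ) ^ (α - 1) * Real.exp (-x * t)) (Ioi (1 : ℝ)) ∧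
    (∑' n : ℕ, (-(x : ℂ)) ^ n / ((Nat.factorial n : ℂ) * ((n : ℂ) + α))) +
        (∫ t in Ioi (1 : ℝ), (t : ℂ) ^ (α - 1) * Real.exp (-x * t)) =
      Complex.exp (-α * Real.log x) * Complex.Gamma α := by
  have hpow : Complex.exp (-α * Real.log x) = (x : ℂ) ^ (-α) := by
    rw [Complex.cpow_def_of_ne_zero (ofReal_ne_zero.mpr hx.ne'), ofReal_log hx.le, mul_comm]
  simp only [ofReal_exp, ofReal_mul, ofReal_neg, hpow]
  exact ⟨summable_norm_pow_div_factorial_mul_add (-x) α,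
    integrableOn_cpow_mul_exp_neg_mul_Ioi_one (α - 1) hx,
    lowerGammaSeries_add_upperGammaIntegral hx (not_exists.mp hα)⟩
end

section
/- Let (a_n)_{n∈ℕ} be a sequence of positive real numbers such that ∑_n a_n^{ε−1} < ∞ for some ε ∈ (0,1), and let k be a natural number such that ∑_n a_n^{−k} < ∞. Suppose F, G : ℂ → ℂ are meromorphic on all of ℂ and holomorphic at 0 with F(s) = ∑_n a_n^{−s} and G(s) = ∑_n (a_n + 1)^{−s} for all s with Re(s) > k. Then the infinite product ∏_n (1 + a_n^{−1}) converges and ∏_n (1 + a_n^{−1}) = exp(−G′(0)) / exp(−F′(0)); in other words, the Fredholm determinant det_Fr(1 + A^{−1}) equals the quotient det(A+1)/det(A) of zeta-regularized determinants. -/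
open Complex Real Set

/-! The difference of the zeta functions of two families `a_i ≤ b_i` is the sum of
`b_i ^ (-s) - a_i ^ (-s)`. By the mean value inequality it is dominated by
`|s| ∑ (b_i - a_i) a_i ^ (-Re s - 1)`, and so it converges up to `Re s > -ε` although the two zeta
functions need not. It agrees with `G - F` far to the right, hence near `0` by the identity theorem
for meromorphic functions, and differentiating it termwise at `0` gives `-∑ log (b_i / a_i)`. -/

open Filter Topology

section RealPowers

variable {ι : Type*}

lemma rpow_sub_le_rpow_mul_rpow {x D t T : ℝ} (hx : 0 < x) (hD : 1 ≤ D) (hxD : x⁻¹ ≤ D)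
    (ht : 0 ≤ t) (htT : t ≤ T) (p : ℝ) : x ^ (p - t) ≤ D ^ T * x ^ p := by
  have hpow : x⁻¹ ^ t ≤ D ^ T :=
    (Real.rpow_le_rpow (by positivity) hxD ht).trans (Real.rpow_le_rpow_of_exponent_le hD htT)
  calc x ^ (p - t) = x⁻¹ ^ t * x ^ p := by
        rw [Real.rpow_sub hx, Real.inv_rpow hx.le, div_eq_inv_mul]
    _ ≤ D ^ T * x ^ p := by gcongr

lemma eventually_one_lt_of_summable_rpow_neg {a : ι → ℝ} (ha : ∀ i, 0 < a i) {k : ℝ} (hk : 0 ≤ k)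
    (hsum : Summable fun i => a i ^ (-k)) : ∀ᶠ i in cofinite, 1 < a i := by
  filter_upwards [hsum.tendsto_cofinite_zero.eventually_lt_const one_pos] with i hi
  contrapose! hi
  exact Real.one_le_rpow_of_pos_of_le_one_of_nonpos (ha i) hi (neg_nonpos.2 hk)

lemma bddAbove_range_inv_of_summable_rpow_neg {a : ι → ℝ} (ha : ∀ i, 0 < a i) {k : ℝ}
    (hk : 0 ≤ k) (hsum : Summable fun i => a i ^ (-k)) : BddAbove (range fun i => (a i)⁻¹) := by
  refine IsBoundedUnder.bddAbove_range_of_cofinite (isBoundedUnder_of_eventually_le (a := 1) ?_)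
  filter_upwards [eventually_one_lt_of_summable_rpow_neg ha hk hsum] with i hi
  exact inv_le_one_of_one_le₀ hi.le

lemma summable_cpow_neg_of_summable_rpow_neg {a : ι → ℝ} (ha : ∀ i, 0 < a i) {k : ℝ}
    (hk : 0 ≤ k) (hsum : Summable fun i => a i ^ (-k)) {s : ℂ} (hs : k ≤ s.re) :
    Summable fun i => (a i : ℂ) ^ (-s) := by
  refine Summable.of_norm_bounded_eventually hsum ?_
  filter_upwards [eventually_one_lt_of_summable_rpow_neg ha hk hsum] with i hi
  rw [norm_cpow_eq_rpow_re_of_pos (ha i), neg_re]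
  exact Real.rpow_le_rpow_of_exponent_le hi.le (neg_le_neg hs)

end RealPowers

section ComplexPowers

lemma ofReal_cpow_eq_exp_mul_log {x : ℝ} (hx : 0 < x) (s : ℂ) :
    (x : ℂ) ^ s = Complex.exp (s * (Real.log x : ℂ)) := by
  rw [cpow_def_of_ne_zero (ofReal_ne_zero.2 hx.ne'), ofReal_log hx.le, mul_comm]

lemma norm_cpow_neg_sub_cpow_neg_le {x y : ℝ} (hx : 0 < x) (hxy : x ≤ y) {s : ℂ}
    (hs : -1 ≤ s.re) :
    ‖(y : ℂ) ^ (-s) - (x : ℂ) ^ (-s)‖ ≤ ‖s‖ * x ^ (-s.re - 1) * (y - x) := by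
  rcases eq_or_ne s 0 with rfl | hs0
  · simp
  have hpos : ∀ u ∈ Icc x y, 0 < u := fun u hu => hx.trans_le hu.1
  have hderiv : ∀ u ∈ Icc x y, HasDerivWithinAt (fun v : ℝ => (v : ℂ) ^ (-s))
      (-s * (u : ℂ) ^ (-s - 1)) (Icc x y) u := fun u hu =>
    (hasDerivAt_ofReal_cpow_const (hpos u hu).ne' (neg_ne_zero.2 hs0)).hasDerivWithinAt
  have hbound : ∀ u ∈ Icc x y, ‖-s * (u : ℂ) ^ (-s - 1)‖ ≤ ‖s‖ * x ^ (-s.re - 1) := by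
    intro u hu
    rw [norm_mul, norm_neg, norm_cpow_eq_rpow_re_of_pos (hpos u hu), sub_re, neg_re, one_re]
    gcongr ‖s‖ * ?_
    exact Real.rpow_le_rpow_of_nonpos hx hu.1 (by linarith)
  simpa [Real.norm_of_nonneg (sub_nonneg.2 hxy)] using
    (convex_Icc x y).norm_image_sub_le_of_norm_hasDerivWithin_le hderiv hbound
      (left_mem_Icc.2 hxy) (right_mem_Icc.2 hxy)

lemma hasDerivAt_ofReal_cpow_neg_zero {x : ℝ} (hx : 0 < x) :
    HasDerivAt (fun s : ℂ => (x : ℂ) ^ (-s)) (-(Real.log x : ℂ)) 0 := by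
  simpa [ofReal_log hx.le] using
    (hasDerivAt_neg (0 : ℂ)).const_cpow (c := (x : ℂ)) (.inl (ofReal_ne_zero.2 hx.ne'))

lemma hasDerivAt_cpow_neg_sub_cpow_neg_zero {x y : ℝ} (hx : 0 < x) (hy : 0 < y) :
    HasDerivAt (fun s : ℂ => (y : ℂ) ^ (-s) - (x : ℂ) ^ (-s)) (-(Real.log (y / x) : ℂ)) 0 := by
  convert! (hasDerivAt_ofReal_cpow_neg_zero hy).sub (hasDerivAt_ofReal_cpow_neg_zero hx) using 1
  rw [Real.log_div hy.ne' hx.ne']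
  push_cast
  ring

lemma differentiable_cpow_neg_sub_cpow_neg {x y : ℝ} (hx : 0 < x) (hy : 0 < y) :
    Differentiable ℂ fun s : ℂ => (y : ℂ) ^ (-s) - (x : ℂ) ^ (-s) :=
  (differentiable_neg.const_cpow (.inl (ofReal_ne_zero.2 hy.ne'))).sub
    (differentiable_neg.const_cpow (.inl (ofReal_ne_zero.2 hx.ne')))

end ComplexPowers

section RelativeZeta

variable {ι : Type*} {a b : ι → ℝ} {ε : ℝ}

/-- The relative zeta function `∑ (b_i ^ (-s) - a_i ^ (-s))` of two families of positive
eigenvalues, summed termwise so that it may converge where neither `∑ a_i ^ (-s)` nor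
`∑ b_i ^ (-s)` does. -/
noncomputable def relativeZeta (a b : ι → ℝ) (s : ℂ) : ℂ :=
  ∑' i, ((b i : ℂ) ^ (-s) - (a i : ℂ) ^ (-s))

lemma relativeZeta_eq_tsum_sub_tsum (ha : ∀ i, 0 < a i) (hab : ∀ i, a i ≤ b i) {k : ℝ}
    (hk : 0 ≤ k) (hsum : Summable fun i => a i ^ (-k)) {s : ℂ} (hs : k ≤ s.re) :
    relativeZeta a b s = ∑' i, (b i : ℂ) ^ (-s) - ∑' i, (a i : ℂ) ^ (-s) := by
  have hb : ∀ i, 0 < b i := fun i => (ha i).trans_le (hab i)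
  have hsum_b : Summable fun i => b i ^ (-k) :=
    hsum.of_nonneg_of_le (fun i => Real.rpow_nonneg (hb i).le _)
      fun i => Real.rpow_le_rpow_of_nonpos (ha i) (hab i) (neg_nonpos.2 hk)
  exact (summable_cpow_neg_of_summable_rpow_neg hb hk hsum_b hs).tsum_sub
    (summable_cpow_neg_of_summable_rpow_neg ha hk hsum hs)

lemma exists_norm_cpow_neg_sub_cpow_neg_le (ha : ∀ i, 0 < a i) (hab : ∀ i, a i ≤ b i)
    (hbdd : BddAbove (range fun i => (a i)⁻¹)) (hε : ε ≤ 1) (R : ℝ) :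
    ∃ C : ℝ, ∀ i, ∀ s ∈ {s : ℂ | -ε < s.re} ∩ Metric.ball 0 R,
      ‖(b i : ℂ) ^ (-s) - (a i : ℂ) ^ (-s)‖ ≤ C * ((b i - a i) * a i ^ (ε - 1)) := by
  obtain ⟨D, hD1, hD⟩ := hbdd.exists_ge 1
  refine ⟨R * D ^ (R + ε), fun i s ⟨hsε, hsR⟩ => ?_⟩
  change -ε < s.re at hsε
  rw [mem_ball_zero_iff] at hsR
  have hre : s.re ≤ ‖s‖ := re_le_norm s
  have hR : 0 ≤ R := (norm_nonneg s).trans hsR.le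
  have hba : 0 ≤ b i - a i := sub_nonneg.2 (hab i)
  have hai : 0 < a i := ha i
  have hpow : a i ^ (-s.re - 1) ≤ D ^ (R + ε) * a i ^ (ε - 1) := by
    convert rpow_sub_le_rpow_mul_rpow (t := s.re + ε) (T := R + ε) hai hD1 (hD _ (mem_range_self i))
      (by linarith) (by linarith) (ε - 1) using 2
    ring
  calc ‖(b i : ℂ) ^ (-s) - (a i : ℂ) ^ (-s)‖
      ≤ ‖s‖ * a i ^ (-s.re - 1) * (b i - a i) :=
        norm_cpow_neg_sub_cpow_neg_le hai (hab i) (by linarith)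
    _ ≤ R * (D ^ (R + ε) * a i ^ (ε - 1)) * (b i - a i) := by gcongr
    _ = R * D ^ (R + ε) * ((b i - a i) * a i ^ (ε - 1)) := by ring

lemma isOpen_halfPlane_inter_ball (ε R : ℝ) :
    IsOpen ({s : ℂ | -ε < s.re} ∩ Metric.ball 0 R) :=
  (isOpen_lt continuous_const continuous_re).inter Metric.isOpen_ball

lemma analyticOnNhd_relativeZeta (ha : ∀ i, 0 < a i) (hab : ∀ i, a i ≤ b i)
    (hbdd : BddAbove (range fun i => (a i)⁻¹)) (hε : ε ≤ 1)
    (hsum : Summable fun i => (b i - a i) * a i ^ (ε - 1)) :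
    AnalyticOnNhd ℂ (relativeZeta a b) {s | -ε < s.re} := by
  intro s hs
  obtain ⟨C, hC⟩ := exists_norm_cpow_neg_sub_cpow_neg_le ha hab hbdd hε (‖s‖ + 1)
  have hdiff : DifferentiableOn ℂ (relativeZeta a b)
      ({s | -ε < s.re} ∩ Metric.ball 0 (‖s‖ + 1)) :=
    differentiableOn_tsum_of_summable_norm (hsum.mul_left C)
      (fun i => (differentiable_cpow_neg_sub_cpow_neg (ha i)
        ((ha i).trans_le (hab i))).differentiableOn)
      (isOpen_halfPlane_inter_ball ε _) hC
  exact hdiff.analyticAt ((isOpen_halfPlane_inter_ball ε _).mem_nhds ⟨hs, by simp⟩)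

lemma hasSum_log_div_neg_deriv_relativeZeta (ha : ∀ i, 0 < a i) (hab : ∀ i, a i ≤ b i)
    (hbdd : BddAbove (range fun i => (a i)⁻¹)) (hε0 : 0 < ε) (hε1 : ε ≤ 1)
    (hsum : Summable fun i => (b i - a i) * a i ^ (ε - 1)) :
    HasSum (fun i => (Real.log (b i / a i) : ℂ)) (-deriv (relativeZeta a b) 0) := by
  have hb : ∀ i, 0 < b i := fun i => (ha i).trans_le (hab i)
  obtain ⟨C, hC⟩ := exists_norm_cpow_neg_sub_cpow_neg_le ha hab hbdd hε1 1
  have hderiv : HasSum _ (deriv (relativeZeta a b) 0) :=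
    hasSum_deriv_of_summable_norm (hsum.mul_left C)
      (fun i => (differentiable_cpow_neg_sub_cpow_neg (ha i) (hb i)).differentiableOn)
      (isOpen_halfPlane_inter_ball ε 1) hC (z := 0) (by simpa using hε0)
  simpa only [(hasDerivAt_cpow_neg_sub_cpow_neg_zero (ha _) (hb _)).deriv, neg_neg]
    using hderiv.neg

lemma multipliable_div_and_tprod_div_eq_exp (ha : ∀ i, 0 < a i) (hab : ∀ i, a i ≤ b i)
    (hbdd : BddAbove (range fun i => (a i)⁻¹)) (hε0 : 0 < ε) (hε1 : ε ≤ 1)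
    (hsum : Summable fun i => (b i - a i) * a i ^ (ε - 1)) :
    (Multipliable fun i => b i / a i) ∧
      ∏' i, ((b i / a i : ℝ) : ℂ) = Complex.exp (-deriv (relativeZeta a b) 0) := by
  have hpos : ∀ i, 0 < b i / a i := fun i => div_pos ((ha i).trans_le (hab i)) (ha i)
  have hlog := hasSum_log_div_neg_deriv_relativeZeta ha hab hbdd hε0 hε1 hsum
  refine ⟨Real.multipliable_of_summable_log hpos (Complex.summable_ofReal.1 hlog.summable), ?_⟩
  have hexp_log : ∀ i, Complex.exp (Real.log (b i / a i)) = ((b i / a i : ℝ) : ℂ) := fun i => by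
    rw [← ofReal_exp, Real.exp_log (hpos i)]
  simpa only [Function.comp_def, hexp_log] using hlog.cexp.tprod_eq

end RelativeZeta

section MeromorphicContinuation

lemma eventuallyEq_nhds_of_meromorphicOn {𝕜 E : Type*} [NontriviallyNormedField 𝕜]
    [NormedAddCommGroup E] [NormedSpace 𝕜 E] {f g : 𝕜 → E} {U : Set 𝕜} {z₀ z₁ : 𝕜}
    (hU : IsPreconnected U) (hf : MeromorphicOn f U) (hg : MeromorphicOn g U)
    (hz₀ : z₀ ∈ U) (hz₁ : z₁ ∈ U) (hf₀ : AnalyticAt 𝕜 f z₀) (hg₀ : AnalyticAt 𝕜 g z₀)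
    (hfg : f =ᶠ[𝓝[≠] z₁] g) : f =ᶠ[𝓝 z₀] g := by
  have hord₁ : meromorphicOrderAt (f - g) z₁ = ⊤ :=
    meromorphicOrderAt_eq_top_iff.2 (hfg.mono fun z hz => sub_eq_zero.2 hz)
  have hord₀ : meromorphicOrderAt (f - g) z₀ = ⊤ := by
    by_contra hne
    exact (hf.sub hg).meromorphicOrderAt_ne_top_of_isPreconnected hU hz₀ hz₁ hne hord₁
  refine (hf₀.frequently_eq_iff_eventually_eq hg₀).1 (Eventually.frequently ?_)
  exact (meromorphicOrderAt_eq_top_iff.1 hord₀).mono fun z hz => sub_eq_zero.1 hz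

variable {ι : Type*} {a b : ι → ℝ} {ε k : ℝ} {F G : ℂ → ℂ}

lemma relativeZeta_eventuallyEq_sub (ha : ∀ i, 0 < a i) (hab : ∀ i, a i ≤ b i)
    (hε0 : 0 < ε) (hε1 : ε ≤ 1) (hsumε : Summable fun i => (b i - a i) * a i ^ (ε - 1))
    (hk : 0 ≤ k) (hsumk : Summable fun i => a i ^ (-k))
    (hF : MeromorphicOn F {s | -ε < s.re}) (hF0 : AnalyticAt ℂ F 0)
    (hG : MeromorphicOn G {s | -ε < s.re}) (hG0 : AnalyticAt ℂ G 0)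
    (hFeq : ∀ s : ℂ, k < s.re → F s = ∑' i, (a i : ℂ) ^ (-s))
    (hGeq : ∀ s : ℂ, k < s.re → G s = ∑' i, (b i : ℂ) ^ (-s)) :
    relativeZeta a b =ᶠ[𝓝 0] G - F := by
  have hanalytic := analyticOnNhd_relativeZeta ha hab
    (bddAbove_range_inv_of_summable_rpow_neg ha hk hsumk) hε1 hsumε
  have h0 : (0 : ℂ) ∈ {s : ℂ | -ε < s.re} := by simpa using hε0
  have hk1 : ((k + 1 : ℝ) : ℂ) ∈ {s : ℂ | -ε < s.re} := show -ε < k + 1 by linarith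
  have heq : relativeZeta a b =ᶠ[𝓝 ((k + 1 : ℝ) : ℂ)] G - F := by
    filter_upwards [(isOpen_lt continuous_const continuous_re).mem_nhds
      (show k < ((k + 1 : ℝ) : ℂ).re from lt_add_one k)] with s hs
    rw [Pi.sub_apply, hFeq s hs, hGeq s hs]
    exact relativeZeta_eq_tsum_sub_tsum ha hab hk hsumk (le_of_lt hs)
  exact eventuallyEq_nhds_of_meromorphicOn (convex_halfSpace_re_gt (-ε)).isPreconnected
    hanalytic.meromorphicOn (hG.sub hF) h0 hk1 (hanalytic 0 h0) (hG0.sub hF0)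
    (heq.filter_mono nhdsWithin_le_nhds)

theorem stmt_14_general (ha : ∀ i, 0 < a i) (hab : ∀ i, a i ≤ b i)
    (hε0 : 0 < ε) (hε1 : ε ≤ 1) (hsumε : Summable fun i => (b i - a i) * a i ^ (ε - 1))
    (hk : 0 ≤ k) (hsumk : Summable fun i => a i ^ (-k))
    (hF : MeromorphicOn F {s | -ε < s.re}) (hF0 : AnalyticAt ℂ F 0)
    (hG : MeromorphicOn G {s | -ε < s.re}) (hG0 : AnalyticAt ℂ G 0)
    (hFeq : ∀ s : ℂ, k < s.re → F s = ∑' i, (a i : ℂ) ^ (-s))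
    (hGeq : ∀ s : ℂ, k < s.re → G s = ∑' i, (b i : ℂ) ^ (-s)) :
    (Multipliable fun i => b i / a i) ∧
      ∏' i, ((b i / a i : ℝ) : ℂ) = Complex.exp (-deriv G 0) / Complex.exp (-deriv F 0) := by
  obtain ⟨hmult, hprod⟩ := multipliable_div_and_tprod_div_eq_exp ha hab
    (bddAbove_range_inv_of_summable_rpow_neg ha hk hsumk) hε0 hε1 hsumε
  have hderiv : deriv (relativeZeta a b) 0 = deriv G 0 - deriv F 0 := by
    rw [(relativeZeta_eventuallyEq_sub ha hab hε0 hε1 hsumε hk hsumk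
      hF hF0 hG hG0 hFeq hGeq).deriv_eq, deriv_sub hG0.differentiableAt hF0.differentiableAt]
  refine ⟨hmult, ?_⟩
  rw [hprod, hderiv, ← Complex.exp_sub, neg_sub, neg_sub_neg]

end MeromorphicContinuation

/-- Fredholm determinant versus zeta-regularized determinants: for positive reals `a n`
with `∑ (a n)^(ε-1) < ∞` for some `ε ∈ (0,1)` and `∑ (a n)^(-k) < ∞`, if `F` and `G` are
meromorphic on `ℂ`, holomorphic at `0`, with `F s = ∑ (a n)^(-s)` and
`G s = ∑ (a n + 1)^(-s)` for `Re s > k`, then the product `∏ (1 + (a n)⁻¹)` converges and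
equals `exp (-G' 0) / exp (-F' 0)`, i.e. `det_Fr (1 + A⁻¹) = det (A + 1) / det A`. -/
theorem stmt_14 (a : ℕ → ℝ) (hapos : ∀ n, 0 < a n)
    (ε : ℝ) (hε0 : 0 < ε) (hε1 : ε < 1) (hsumε : Summable fun n => a n ^ (ε - 1))
    (k : ℕ) (hsumk : Summable fun n => a n ^ (-(k : ℝ)))
    (F G : ℂ → ℂ)
    (hF : MeromorphicOn F Set.univ) (hF0 : AnalyticAt ℂ F 0)
    (hG : MeromorphicOn G Set.univ) (hG0 : AnalyticAt ℂ G 0)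
    (hFeq : ∀ s : ℂ, (k : ℝ) < s.re →
      F s = ∑' n : ℕ, Complex.exp (-s * (Real.log (a n) : ℂ)))
    (hGeq : ∀ s : ℂ, (k : ℝ) < s.re →
      G s = ∑' n : ℕ, Complex.exp (-s * (Real.log (a n + 1) : ℂ))) :
    (Multipliable fun n : ℕ => (1 + (a n)⁻¹ : ℝ)) ∧
    ((∏' n : ℕ, (1 + (a n)⁻¹ : ℝ)) : ℂ) =
      Complex.exp (-deriv G 0) / Complex.exp (-deriv F 0) := by
  have hdiv : ∀ n, (a n + 1) / a n = 1 + (a n)⁻¹ := fun n => by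
    rw [add_div, div_self (hapos n).ne', one_div]
  simp_rw [← hdiv]
  refine stmt_14_general hapos (fun n => (lt_add_one (a n)).le) hε0 hε1.le (by simpa using hsumε)
    k.cast_nonneg hsumk (hF.mono_set (subset_univ _)) hF0 (hG.mono_set (subset_univ _)) hG0
    (fun s hs => ?_) (fun s hs => ?_)
  · simp_rw [hFeq s hs, ofReal_cpow_eq_exp_mul_log (hapos _)]
  · simp_rw [hGeq s hs, ofReal_cpow_eq_exp_mul_log (add_pos (hapos _) one_pos)]
end

section
/- Let n be a natural number and for a function g : ℝ → ℂ write ‖g‖_m := sup_{x∈ℝ} (1 + x²)^m · |g(x)|. Let f : ℝ → ℂ be a smooth even function with ‖f‖_{n+1} < ∞, ‖f′‖_{n+1} < ∞ and ‖f″‖_{n+1} < ∞. Then for every δ > 0 there exists a smooth, even, compactly supported function φ : ℝ → ℂ such that the Fourier transform g := 𝓕φ (restricted to the real line) satisfies ‖f − g‖_n ≤ δ, i.e. sup_{x∈ℝ} (1 + x²)^n · |f(x) − (𝓕φ)(x)| ≤ δ. -/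
open Complex Real FourierTransform

open Filter MeasureTheory Topology
open scoped ContDiff SchwartzMap

/-!
Cutting off and mollifying reduces the claim to `f` smooth with compact support, so that `𝓕⁻ f` is
a Schwartz function. Compactly supported smooth functions are dense in the Schwartz space: if
`χ 0 = 1`, then `χ (c • ·) • ψ → ψ` as `c → 0`, because `1 - χ (c • ·)` and its derivatives are
`O(|c| (1 + ‖x‖))` and the extra factor `1 + ‖x‖` is absorbed by the decay of `ψ`. The Fourier
transform is a continuous automorphism of the Schwartz space, whose topology controls every weight
`(1 + ‖x‖ ^ 2) ^ n`. Finally, replacing the approximant by its even part does not increase the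
distance to an even function.
-/

section SchwartzDensity

variable {V E : Type*} [NormedAddCommGroup V] [NormedSpace ℝ V]
  [NormedAddCommGroup E] [NormedSpace ℝ E]

lemma norm_schwartz_sub_le (f : 𝓢(V, E)) (x y : V) :
    ‖f x - f y‖ ≤ SchwartzMap.seminorm ℝ 0 1 f * ‖x - y‖ := by
  refine convex_univ.norm_image_sub_le_of_norm_fderiv_le (𝕜 := ℝ)
    (fun z _ ↦ f.differentiableAt) (fun z _ ↦ ?_) (Set.mem_univ y) (Set.mem_univ x)
  simpa [norm_iteratedFDeriv_one] using SchwartzMap.le_seminorm ℝ 0 1 f z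

lemma norm_iteratedFDeriv_dilation_sub_le (χ : 𝓢(V, E)) {c : ℝ} (hc : |c| ≤ 1) (i : ℕ) (x : V) :
    ‖iteratedFDeriv ℝ i (fun y ↦ χ (c • y) - χ 0) x‖ ≤
      |c| * (1 + ‖x‖) * SchwartzMap.seminorm ℝ 0 (max i 1) χ := by
  obtain rfl | hi := Nat.eq_zero_or_pos i
  · calc ‖iteratedFDeriv ℝ 0 (fun y ↦ χ (c • y) - χ 0) x‖
        = ‖χ (c • x) - χ 0‖ := norm_iteratedFDeriv_zero
      _ ≤ SchwartzMap.seminorm ℝ 0 1 χ * (|c| * ‖x‖) := by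
        simpa [norm_smul] using norm_schwartz_sub_le χ (c • x) 0
      _ ≤ |c| * (1 + ‖x‖) * SchwartzMap.seminorm ℝ 0 1 χ := by
        rw [mul_comm]
        gcongr
        linarith
  · have hderiv : iteratedFDeriv ℝ i (fun y ↦ χ (c • y) - χ 0) x =
        c ^ i • iteratedFDeriv ℝ i χ (c • x) := by
      have hχ : ContDiff ℝ i χ := χ.smooth i
      rw [fun_iteratedFDeriv_sub_apply (by fun_prop) (by fun_prop),
        iteratedFDeriv_const_of_ne hi.ne', iteratedFDeriv_comp_const_smul c hχ]
      simp
    have hcpow : |c| ^ i ≤ |c| := pow_le_of_le_one (abs_nonneg c) hc hi.ne'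
    have hseminorm : ‖iteratedFDeriv ℝ i χ (c • x)‖ ≤ SchwartzMap.seminorm ℝ 0 i χ := by
      simpa using SchwartzMap.le_seminorm ℝ 0 i χ (c • x)
    calc ‖iteratedFDeriv ℝ i (fun y ↦ χ (c • y) - χ 0) x‖
        = |c| ^ i * ‖iteratedFDeriv ℝ i χ (c • x)‖ := by rw [hderiv, norm_smul]; simp
      _ ≤ |c| * SchwartzMap.seminorm ℝ 0 i χ := by gcongr
      _ ≤ |c| * (1 + ‖x‖) * SchwartzMap.seminorm ℝ 0 (max i 1) χ := by
        rw [max_eq_left hi]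
        gcongr
        exact le_mul_of_one_le_right (abs_nonneg c) (by linarith [norm_nonneg x])

lemma seminorm_smulLeftCLM_le {u : V → ℝ} (hu : u.HasTemperateGrowth) {m : ℕ} {C : ℝ}
    (hC : ∀ i ≤ m, ∀ x, ‖iteratedFDeriv ℝ i u x‖ ≤ C * (1 + ‖x‖)) (k : ℕ) (ψ : 𝓢(V, E)) :
    SchwartzMap.seminorm ℝ k m (SchwartzMap.smulLeftCLM E u ψ) ≤
      C * (2 ^ m * (2 ^ (k + 1) *
        (Finset.Iic (k + 1, m)).sup (schwartzSeminormFamily ℝ V E) ψ)) := by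
  set S := 2 ^ (k + 1) * (Finset.Iic (k + 1, m)).sup (schwartzSeminormFamily ℝ V E) ψ
  have hC₀ : 0 ≤ C := by simpa using (norm_nonneg _).trans (hC 0 m.zero_le 0)
  refine SchwartzMap.seminorm_le_bound ℝ k m _ (by positivity) fun x ↦ ?_
  have hweight : ‖x‖ ^ k * (1 + ‖x‖) ≤ (1 + ‖x‖) ^ (k + 1) := by
    rw [pow_succ]
    gcongr
    linarith
  have hterm (i : ℕ) (hi : i ∈ Finset.range (m + 1)) :
      ‖x‖ ^ k * (‖iteratedFDeriv ℝ i u x‖ * ‖iteratedFDeriv ℝ (m - i) ψ x‖) ≤ C * S :=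
    calc ‖x‖ ^ k * (‖iteratedFDeriv ℝ i u x‖ * ‖iteratedFDeriv ℝ (m - i) ψ x‖)
        ≤ ‖x‖ ^ k * (C * (1 + ‖x‖) * ‖iteratedFDeriv ℝ (m - i) ψ x‖) := by
          gcongr
          exact hC i (Finset.mem_range_succ_iff.mp hi) x
      _ = C * (‖x‖ ^ k * (1 + ‖x‖) * ‖iteratedFDeriv ℝ (m - i) ψ x‖) := by ring
      _ ≤ C * ((1 + ‖x‖) ^ (k + 1) * ‖iteratedFDeriv ℝ (m - i) ψ x‖) := by gcongr
      _ ≤ C * S := by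
          gcongr
          exact SchwartzMap.one_add_le_sup_seminorm_apply (m := (k + 1, m)) le_rfl
            (Nat.sub_le m i) ψ x
  rw [SchwartzMap.smulLeftCLM_apply hu]
  calc ‖x‖ ^ k * ‖iteratedFDeriv ℝ m (fun y ↦ u y • ψ y) x‖
      ≤ ‖x‖ ^ k * ∑ i ∈ Finset.range (m + 1), (m.choose i : ℝ) *
          ‖iteratedFDeriv ℝ i u x‖ * ‖iteratedFDeriv ℝ (m - i) ψ x‖ := by
        gcongr
        exact norm_iteratedFDeriv_smul_le hu.1 (ψ.smooth ⊤) x (mod_cast le_top)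
    _ = ∑ i ∈ Finset.range (m + 1), (m.choose i : ℝ) *
          (‖x‖ ^ k * (‖iteratedFDeriv ℝ i u x‖ * ‖iteratedFDeriv ℝ (m - i) ψ x‖)) := by
        rw [Finset.mul_sum]
        exact Finset.sum_congr rfl fun i _ ↦ by ring
    _ ≤ ∑ i ∈ Finset.range (m + 1), (m.choose i : ℝ) * (C * S) := by
        gcongr ∑ i ∈ _, _ * ?_ with i hi
        exact hterm i hi
    _ = C * (2 ^ m * S) := by
        rw [← Finset.sum_mul, ← Nat.cast_sum, Nat.sum_range_choose]
        push_cast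
        ring

lemma hasTemperateGrowth_dilation (χ : 𝓢(V, E)) (c : ℝ) :
    (fun x ↦ χ (c • x)).HasTemperateGrowth :=
  χ.hasTemperateGrowth.comp (c • ContinuousLinearMap.id ℝ V).hasTemperateGrowth

lemma seminorm_smulLeftCLM_dilation_sub_le {χ : 𝓢(V, ℝ)} (hχ : χ 0 = 1) {c : ℝ} (hc : |c| ≤ 1)
    (k m : ℕ) (ψ : 𝓢(V, E)) :
    SchwartzMap.seminorm ℝ k m (SchwartzMap.smulLeftCLM E (fun x ↦ χ (c • x)) ψ - ψ) ≤
      |c| * (Finset.Iic (0, m + 1)).sup (schwartzSeminormFamily ℝ V ℝ) χ *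
        (2 ^ m * (2 ^ (k + 1) *
          (Finset.Iic (k + 1, m)).sup (schwartzSeminormFamily ℝ V E) ψ)) := by
  have hdil := hasTemperateGrowth_dilation χ c
  have hdil_sub : (fun x ↦ χ (c • x) - χ 0).HasTemperateGrowth := hdil.sub (.const _)
  have hfactor : SchwartzMap.smulLeftCLM E (fun x ↦ χ (c • x)) ψ - ψ =
      SchwartzMap.smulLeftCLM E (fun x ↦ χ (c • x) - χ 0) ψ := by
    ext x
    rw [sub_apply, SchwartzMap.smulLeftCLM_apply_apply hdil,
      SchwartzMap.smulLeftCLM_apply_apply hdil_sub, hχ, sub_smul, one_smul]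
  rw [hfactor]
  apply seminorm_smulLeftCLM_le hdil_sub
  intro i hi x
  have hmem : (0, max i 1) ∈ Finset.Iic (0, m + 1) := by
    rw [Finset.mem_Iic, Prod.mk_le_mk]
    lia
  have hle : SchwartzMap.seminorm ℝ 0 (max i 1) χ ≤
      (Finset.Iic (0, m + 1)).sup (schwartzSeminormFamily ℝ V ℝ) χ :=
    Finset.le_sup (f := schwartzSeminormFamily ℝ V ℝ) hmem χ
  calc ‖iteratedFDeriv ℝ i (fun y ↦ χ (c • y) - χ 0) x‖
      ≤ |c| * (1 + ‖x‖) * SchwartzMap.seminorm ℝ 0 (max i 1) χ :=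
        norm_iteratedFDeriv_dilation_sub_le χ hc i x
    _ ≤ |c| * (1 + ‖x‖) * (Finset.Iic (0, m + 1)).sup (schwartzSeminormFamily ℝ V ℝ) χ := by gcongr
    _ = |c| * (Finset.Iic (0, m + 1)).sup (schwartzSeminormFamily ℝ V ℝ) χ * (1 + ‖x‖) := by ring

lemma tendsto_smulLeftCLM_dilation {χ : 𝓢(V, ℝ)} (hχ : χ 0 = 1) (ψ : 𝓢(V, E)) :
    Tendsto (fun c : ℝ ↦ SchwartzMap.smulLeftCLM E (fun x ↦ χ (c • x)) ψ) (𝓝 0) (𝓝 ψ) := by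
  rw [(schwartz_withSeminorms ℝ V E).tendsto_nhds]
  rintro ⟨k, m⟩ ε hε
  have hunit : ∀ᶠ c : ℝ in 𝓝 0, |c| ≤ 1 :=
    (continuous_abs.tendsto' 0 0 abs_zero).eventually_le_const one_pos
  have hsmall (A B : ℝ) : ∀ᶠ c : ℝ in 𝓝 0, |c| * A * B < ε :=
    Tendsto.eventually_lt_const hε (Continuous.tendsto' (by fun_prop) _ _ (by simp))
  filter_upwards [hunit, hsmall _ _] with c hc hcε
  exact (seminorm_smulLeftCLM_dilation_sub_le hχ hc k m ψ).trans_lt hcε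

lemma dense_hasCompactSupport_schwartz [FiniteDimensional ℝ V] :
    Dense {ψ : 𝓢(V, E) | HasCompactSupport ψ} := by
  let b : ContDiffBump (0 : V) := default
  let χ : 𝓢(V, ℝ) := b.hasCompactSupport.toSchwartzMap b.contDiff
  have hχ : χ 0 = 1 := b.one_of_mem_closedBall (Metric.mem_closedBall_self b.rIn_pos.le)
  intro ψ
  refine mem_closure_of_tendsto ((tendsto_smulLeftCLM_dilation hχ ψ).mono_left
    (nhdsWithin_le_nhds (s := {0}ᶜ))) ?_
  filter_upwards [self_mem_nhdsWithin] with c hc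
  rw [SchwartzMap.smulLeftCLM_apply (hasTemperateGrowth_dilation χ c)]
  exact (b.hasCompactSupport.comp_smul hc).smul_right

end SchwartzDensity

section WeightedApproximation

lemma one_add_norm_sq_pow_mul_norm_le {V E : Type*} [NormedAddCommGroup V] [NormedSpace ℝ V]
    [NormedAddCommGroup E] [NormedSpace ℝ E] (n : ℕ) (h : 𝓢(V, E)) (x : V) :
    (1 + ‖x‖ ^ 2) ^ n * ‖h x‖ ≤
      2 ^ (2 * n) * (Finset.Iic (2 * n, 0)).sup (schwartzSeminormFamily ℝ V E) h :=
  calc (1 + ‖x‖ ^ 2) ^ n * ‖h x‖ ≤ ((1 + ‖x‖) ^ 2) ^ n * ‖h x‖ := by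
        gcongr
        nlinarith [norm_nonneg x]
    _ = (1 + ‖x‖) ^ (2 * n) * ‖iteratedFDeriv ℝ 0 h x‖ := by
        rw [pow_mul, norm_iteratedFDeriv_zero]
    _ ≤ _ := SchwartzMap.one_add_le_sup_seminorm_apply (m := (2 * n, 0)) le_rfl le_rfl h x

lemma tendsto_one_add_norm_sq_pow_mul_norm {V E : Type*} [NormedAddCommGroup V] [ProperSpace V]
    [NormedAddCommGroup E] {n : ℕ} {f : V → E} {M : ℝ}
    (hM : ∀ x, (1 + ‖x‖ ^ 2) ^ (n + 1) * ‖f x‖ ≤ M) :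
    Tendsto (fun x ↦ (1 + ‖x‖ ^ 2) ^ n * ‖f x‖) (cocompact V) (𝓝 0) := by
  have hweight : Tendsto (fun x : V ↦ 1 + ‖x‖ ^ 2) (cocompact V) atTop :=
    tendsto_atTop_add_const_left _ 1
      ((tendsto_pow_atTop two_ne_zero).comp tendsto_norm_cocompact_atTop)
  refine squeeze_zero (fun x ↦ by positivity) (fun x ↦ ?_) (hweight.const_div_atTop M)
  rw [le_div_iff₀ (by positivity)]
  calc (1 + ‖x‖ ^ 2) ^ n * ‖f x‖ * (1 + ‖x‖ ^ 2) = (1 + ‖x‖ ^ 2) ^ (n + 1) * ‖f x‖ := by ring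
    _ ≤ M := hM x

lemma exists_continuous_hasCompactSupport_mul_norm_sub_lt {X E : Type*} [TopologicalSpace X]
    [RegularSpace X] [LocallyCompactSpace X] [NormedAddCommGroup E] [NormedSpace ℝ E]
    {w : X → ℝ} (hw : ∀ x, 0 ≤ w x) {f : X → E} (hf : Continuous f)
    (hdecay : Tendsto (fun x ↦ w x * ‖f x‖) (cocompact X) (𝓝 0)) {δ : ℝ} (hδ : 0 < δ) :
    ∃ g : X → E, Continuous g ∧ HasCompactSupport g ∧ ∀ x, w x * ‖f x - g x‖ < δ := by
  obtain ⟨K, hK, hKδ⟩ := mem_cocompact.1 (hdecay.eventually_lt_const hδ)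
  obtain ⟨χ, hχK, -, hχ_supp, hχ_mem⟩ :=
    exists_continuous_one_zero_of_isCompact hK isClosed_empty (Set.disjoint_empty K)
  refine ⟨fun x ↦ χ x • f x, by fun_prop, hχ_supp.smul_right, fun x ↦ ?_⟩
  have hsub : f x - χ x • f x = (1 - χ x) • f x := by rw [sub_smul, one_smul]
  rw [hsub, norm_smul, Real.norm_of_nonneg (sub_nonneg.2 (hχ_mem x).2)]
  by_cases hx : x ∈ K
  · simpa [hχK hx] using hδ
  · calc w x * ((1 - χ x) * ‖f x‖) ≤ w x * (1 * ‖f x‖) := by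
          gcongr
          · exact hw x
          · linarith [(hχ_mem x).1]
      _ < δ := by simpa using hKδ hx

lemma exists_contDiff_hasCompactSupport_mul_norm_sub_lt {V E : Type*} [NormedAddCommGroup V]
    [NormedSpace ℝ V] [FiniteDimensional ℝ V] [NormedAddCommGroup E] [NormedSpace ℝ E]
    {w : V → ℝ} (hw : Continuous w) (hw_pos : ∀ x, 0 < w x) {f : V → E} (hf : Continuous f)
    (hdecay : Tendsto (fun x ↦ w x * ‖f x‖) (cocompact V) (𝓝 0)) {δ : ℝ} (hδ : 0 < δ) :
    ∃ g : V → E, ContDiff ℝ ∞ g ∧ HasCompactSupport g ∧ ∀ x, w x * ‖f x - g x‖ < δ := by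
  have := FiniteDimensional.proper ℝ V
  obtain ⟨f₀, hf₀, hf₀_supp, hff₀⟩ := exists_continuous_hasCompactSupport_mul_norm_sub_lt
    (fun x ↦ (hw_pos x).le) hf hdecay (half_pos hδ)
  obtain ⟨g, hg, hgf₀, hg_supp⟩ := hf₀.exists_contDiff_approx (ε := fun x ↦ δ / 2 / w x) ⊤
    (continuous_const.div hw fun x ↦ (hw_pos x).ne') fun x ↦ div_pos (half_pos hδ) (hw_pos x)
  refine ⟨g, hg, hf₀_supp.mono hg_supp, fun x ↦ ?_⟩
  have hf₀g : w x * ‖f₀ x - g x‖ < δ / 2 := by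
    rw [mul_comm, ← lt_div_iff₀ (hw_pos x), norm_sub_rev, ← dist_eq_norm]
    exact hgf₀ x
  calc w x * ‖f x - g x‖ ≤ w x * (‖f x - f₀ x‖ + ‖f₀ x - g x‖) :=
        mul_le_mul_of_nonneg_left (norm_sub_le_norm_sub_add_norm_sub _ _ _) (hw_pos x).le
    _ < δ := by rw [mul_add]; linarith [hff₀ x]

end WeightedApproximation

section EvenPart

variable {V E : Type*}

/-- The even part `x ↦ (φ x + φ (-x)) / 2` of a vector-valued function, used to symmetrize an
approximant of an even function. -/
noncomputable def evenPart [Neg V] [AddCommGroup E] [Module ℝ E] (φ : V → E) (x : V) : E :=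
  (2⁻¹ : ℝ) • (φ x + φ (-x))

lemma even_evenPart [InvolutiveNeg V] [AddCommGroup E] [Module ℝ E] (φ : V → E) :
    (evenPart φ).Even := fun x ↦ by
  simp only [evenPart, neg_neg, add_comm]

lemma norm_sub_evenPart_le [Neg V] [NormedAddCommGroup E] [NormedSpace ℝ E] {f : V → E}
    (hf : f.Even) (g : V → E) (x : V) :
    ‖f x - evenPart g x‖ ≤ (‖f x - g x‖ + ‖f (-x) - g (-x)‖) / 2 := by
  have hsplit : f x - evenPart g x = (2⁻¹ : ℝ) • ((f x - g x) + (f (-x) - g (-x))) := by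
    rw [evenPart, hf x]
    module
  rw [hsplit, norm_smul, div_eq_inv_mul, Real.norm_of_nonneg (by positivity)]
  gcongr
  exact norm_add_le _ _

lemma mul_norm_sub_evenPart_le [Neg V] [NormedAddCommGroup E] [NormedSpace ℝ E] {w : V → ℝ}
    (hw : w.Even) (hw_nonneg : ∀ x, 0 ≤ w x) {f g : V → E} (hf : f.Even) {δ : ℝ}
    (hfg : ∀ x, w x * ‖f x - g x‖ ≤ δ) (x : V) : w x * ‖f x - evenPart g x‖ ≤ δ := by
  have hneg := hfg (-x)
  rw [hw x] at hneg
  calc w x * ‖f x - evenPart g x‖ ≤ w x * ((‖f x - g x‖ + ‖f (-x) - g (-x)‖) / 2) :=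
        mul_le_mul_of_nonneg_left (norm_sub_evenPart_le hf g x) (hw_nonneg x)
    _ ≤ δ := by linarith [hfg x]

lemma contDiff_evenPart [NormedAddCommGroup V] [NormedSpace ℝ V] [NormedAddCommGroup E]
    [NormedSpace ℝ E] {k : ℕ∞ω} {φ : V → E} (hφ : ContDiff ℝ k φ) :
    ContDiff ℝ k (evenPart φ) :=
  (hφ.add (hφ.comp contDiff_neg)).const_smul _

lemma hasCompactSupport_evenPart [TopologicalSpace V] [InvolutiveNeg V] [ContinuousNeg V]
    [AddCommGroup E] [Module ℝ E] {φ : V → E} (hφ : HasCompactSupport φ) :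
    HasCompactSupport (evenPart φ) :=
  (hφ.add (hφ.comp_homeomorph (Homeomorph.neg V))).smul_left (f := fun _ ↦ (2⁻¹ : ℝ))

lemma fourier_evenPart [NormedAddCommGroup V] [InnerProductSpace ℝ V] [FiniteDimensional ℝ V]
    [MeasurableSpace V] [BorelSpace V] [NormedAddCommGroup E] [NormedSpace ℂ E] {φ : V → E}
    (hφ : Integrable φ) : 𝓕 (evenPart φ) = evenPart (𝓕 φ) := by
  ext w
  have hreflect : 𝓕 (fun v ↦ φ (-v)) w = 𝓕 φ (-w) :=
    Real.fourier_comp_linearIsometry (LinearIsometryEquiv.neg ℝ) φ w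
  have hint := (Real.fourierIntegral_convergent_iff w).2 hφ
  have hint_neg := (Real.fourierIntegral_convergent_iff w).2 hφ.comp_neg
  rw [evenPart, ← hreflect]
  simp only [Real.fourier_eq, evenPart, smul_comm _ (2⁻¹ : ℝ), smul_add]
  rw [integral_add (hint.fun_smul _) (hint_neg.fun_smul _), integral_smul, integral_smul]

end EvenPart

section FourierDensity

variable {V E : Type*} [NormedAddCommGroup V] [InnerProductSpace ℝ V] [FiniteDimensional ℝ V]
  [MeasurableSpace V] [BorelSpace V] [NormedAddCommGroup E] [NormedSpace ℂ E] [CompleteSpace E]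

lemma dense_fourier_hasCompactSupport_schwartz :
    Dense (𝓕 '' {ψ : 𝓢(V, E) | HasCompactSupport ψ} : Set 𝓢(V, E)) :=
  have hsurj : Function.Surjective (𝓕 : 𝓢(V, E) → 𝓢(V, E)) :=
    fun h ↦ ⟨𝓕⁻ h, FourierTransform.fourier_fourierInv_eq h⟩
  hsurj.denseRange.dense_image ContinuousFourier.continuous_fourier
    dense_hasCompactSupport_schwartz

lemma exists_hasCompactSupport_mul_norm_sub_fourier_lt (n : ℕ) (h : 𝓢(V, E)) {δ : ℝ}
    (hδ : 0 < δ) :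
    ∃ ψ : 𝓢(V, E), HasCompactSupport ψ ∧ ∀ x, (1 + ‖x‖ ^ 2) ^ n * ‖h x - 𝓕 ψ x‖ < δ := by
  let p : Seminorm ℝ 𝓢(V, E) := (Finset.Iic (2 * n, 0)).sup (schwartzSeminormFamily ℝ V E)
  have hp : Continuous p :=
    Seminorm.continuous_finsetSup fun i _ ↦ (schwartz_withSeminorms ℝ V E).continuous_seminorm i
  have hopen : IsOpen {g : 𝓢(V, E) | 2 ^ (2 * n) * p (h - g) < δ} :=
    isOpen_lt (by fun_prop) continuous_const
  obtain ⟨_, hψ_close, ψ, hψ, rfl⟩ := dense_fourier_hasCompactSupport_schwartz.inter_open_nonempty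
    _ hopen ⟨h, by simpa using hδ⟩
  exact ⟨ψ, hψ, fun x ↦ (one_add_norm_sq_pow_mul_norm_le n (h - 𝓕 ψ) x).trans_lt hψ_close⟩

theorem exists_contDiff_hasCompactSupport_mul_norm_sub_fourier_lt (n : ℕ) {f : V → E}
    (hf : Continuous f)
    (hdecay : Tendsto (fun x ↦ (1 + ‖x‖ ^ 2) ^ n * ‖f x‖) (cocompact V) (𝓝 0))
    {δ : ℝ} (hδ : 0 < δ) :
    ∃ φ : V → E, ContDiff ℝ ∞ φ ∧ HasCompactSupport φ ∧
      ∀ x, (1 + ‖x‖ ^ 2) ^ n * ‖f x - 𝓕 φ x‖ < δ := by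
  obtain ⟨g, hg, hg_supp, hfg⟩ := exists_contDiff_hasCompactSupport_mul_norm_sub_lt
    (w := fun x ↦ (1 + ‖x‖ ^ 2) ^ n) (by fun_prop) (fun x ↦ by positivity) hf hdecay (half_pos hδ)
  obtain ⟨ψ, hψ, hgψ⟩ := exists_hasCompactSupport_mul_norm_sub_fourier_lt n
    (hg_supp.toSchwartzMap hg) (half_pos hδ)
  refine ⟨ψ, ψ.smooth ⊤, hψ, fun x ↦ ?_⟩
  calc (1 + ‖x‖ ^ 2) ^ n * ‖f x - 𝓕 ψ x‖
      ≤ (1 + ‖x‖ ^ 2) ^ n * (‖f x - g x‖ + ‖g x - 𝓕 ψ x‖) := by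
        gcongr
        exact norm_sub_le_norm_sub_add_norm_sub _ _ _
    _ < δ := by
        rw [mul_add]
        exact (add_lt_add (hfg x) (hgψ x)).trans_eq (add_halves δ)

theorem stmt_16_general (n : ℕ) {f : V → E} (hf : Continuous f) (heven : f.Even)
    (hdecay : Tendsto (fun x ↦ (1 + ‖x‖ ^ 2) ^ n * ‖f x‖) (cocompact V) (𝓝 0))
    {δ : ℝ} (hδ : 0 < δ) :
    ∃ φ : V → E, ContDiff ℝ ∞ φ ∧ φ.Even ∧ HasCompactSupport φ ∧
      ∀ x, (1 + ‖x‖ ^ 2) ^ n * ‖f x - 𝓕 φ x‖ ≤ δ := by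
  obtain ⟨φ, hφ, hφ_supp, hfφ⟩ :=
    exists_contDiff_hasCompactSupport_mul_norm_sub_fourier_lt n hf hdecay hδ
  refine ⟨evenPart φ, contDiff_evenPart hφ, even_evenPart φ, hasCompactSupport_evenPart hφ_supp, ?_⟩
  rw [fourier_evenPart (hφ.continuous.integrable_of_hasCompactSupport hφ_supp)]
  exact mul_norm_sub_evenPart_le (fun x ↦ by rw [norm_neg]) (fun x ↦ by positivity) heven
    fun x ↦ (hfφ x).le

end FourierDensity

/-- Density of the Paley–Wiener space in `F_ev^{n+1}` for the norm `‖·‖_n`: if `f : ℝ → ℂ`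
is smooth, even, and `f`, `f'`, `f''` satisfy `sup_x (1+x²)^(n+1) |g(x)| < ∞`, then for
every `δ > 0` there is a smooth, even, compactly supported `φ` with
`sup_x (1+x²)^n |f x - 𝓕 φ x| ≤ δ`. -/
theorem stmt_16 (n : ℕ) (f : ℝ → ℂ)
    (hf : ContDiff ℝ (⊤ : ℕ∞) f) (heven : ∀ x : ℝ, f (-x) = f x)
    (hbd : ∃ M : ℝ, ∀ x : ℝ, (1 + x ^ 2) ^ (n + 1) * ‖f x‖ ≤ M)
    (hbd' : ∃ M : ℝ, ∀ x : ℝ, (1 + x ^ 2) ^ (n + 1) * ‖deriv f x‖ ≤ M)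
    (hbd'' : ∃ M : ℝ, ∀ x : ℝ, (1 + x ^ 2) ^ (n + 1) * ‖deriv (deriv f) x‖ ≤ M) :
    ∀ δ : ℝ, 0 < δ →
      ∃ φ : ℝ → ℂ, ContDiff ℝ (⊤ : ℕ∞) φ ∧ (∀ x : ℝ, φ (-x) = φ x) ∧ HasCompactSupport φ ∧
        ∀ x : ℝ, (1 + x ^ 2) ^ n * ‖f x - 𝓕 φ x‖ ≤ δ := by
  intro δ hδ
  obtain ⟨M, hM⟩ := hbd
  have hdecay : Tendsto (fun x : ℝ ↦ (1 + ‖x‖ ^ 2) ^ n * ‖f x‖) (cocompact ℝ) (𝓝 0) :=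
    tendsto_one_add_norm_sq_pow_mul_norm (by simpa using hM)
  simpa using! stmt_16_general n hf.continuous heven hdecay hδ
end

section
/- Let δ > 0, R ∈ ℝ, and let (F_j)_{j∈ℕ} be a sequence of functions F_j : ℂ × ℂ → ℂ such that: (i) for every j and every s ∈ ℂ, the function λ ↦ F_j(λ, s) is complex differentiable on {Re(λ) > 0} with derivative at λ equal to F_j(λ, s+1); (ii) for every ε > 0 there exists M > 0 such that |F_j(λ, s)| ≤ ε for all j ∈ ℕ, all λ with Re(λ) ≥ M, and all s with R − 1 < Re(s) ≤ R + 1; (iii) for every ε > 0 there exists J ∈ ℕ such that |F_j(λ, s)| ≤ ε for all j ≥ J, all λ with Re(λ) ≥ δ, and all s with R < Re(s) ≤ R + 1. Then for every ε > 0 there exists J ∈ ℕ such that |F_j(λ, s)| ≤ ε for all j ≥ J, all λ with Re(λ) ≥ δ, and all s with R − 1 < Re(s) ≤ R. -/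
open Complex

/-!
Integrating the differential equation along the horizontal segment from `λ` to `λ + t` gives
`‖F_j (λ, s)‖ ≤ ‖F_j (λ + t, s)‖ + t * sup ‖F_j (·, s + 1)‖`. The decay hypothesis fixes `t`
uniformly in `j` and `s`, making the first term small; once `t` is fixed, convergence on the strip
`R < Re s ≤ R + 1` makes the second term small for large `j`.
-/

open Filter

section HalfPlane

variable {E : Type*} [NormedAddCommGroup E] [NormedSpace ℂ E] {δ : ℝ}

theorem norm_le_norm_add_ofReal_add_mul_of_hasDerivWithinAt {f f' : ℂ → E} {C t : ℝ} {z : ℂ}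
    (hderiv : ∀ w, δ ≤ w.re → HasDerivWithinAt f (f' w) {w | δ ≤ w.re} w)
    (hbound : ∀ w, δ ≤ w.re → ‖f' w‖ ≤ C) (hz : δ ≤ z.re) (ht : 0 ≤ t) :
    ‖f z‖ ≤ ‖f (z + t)‖ + C * t := by
  have hzt : δ ≤ (z + t).re := by
    rw [add_re, ofReal_re]
    linarith
  calc ‖f z‖ ≤ ‖f (z + t)‖ + ‖f z - f (z + t)‖ := norm_le_norm_add_norm_sub' _ _
    _ ≤ ‖f (z + t)‖ + C * ‖z - (z + t)‖ := by
      gcongr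
      exact (convex_halfSpace_re_ge δ).norm_image_sub_le_of_norm_hasDerivWithin_le
        hderiv hbound hzt hz
    _ = ‖f (z + t)‖ + C * t := by
      rw [sub_add_cancel_left, norm_neg, norm_real, Real.norm_of_nonneg ht]

theorem eventually_norm_le_of_hasDerivWithinAt_of_decay {α : Type*} {q : Filter α}
    {f f' : α → ℂ → E}
    (hderiv : ∀ᶠ a in q, ∀ z, δ ≤ z.re →
      HasDerivWithinAt (f a) (f' a z) {w | δ ≤ w.re} z)
    (hdecay : ∀ ε : ℝ, 0 < ε → ∃ M : ℝ, ∀ᶠ a in q, ∀ z, M ≤ z.re → ‖f a z‖ ≤ ε)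
    (hconv : ∀ ε : ℝ, 0 < ε → ∀ᶠ a in q, ∀ z, δ ≤ z.re → ‖f' a z‖ ≤ ε) {ε : ℝ} (hε : 0 < ε) :
    ∀ᶠ a in q, ∀ z, δ ≤ z.re → ‖f a z‖ ≤ ε := by
  obtain ⟨M, hM⟩ := hdecay (ε / 2) (half_pos hε)
  obtain ⟨t, ht, hMt⟩ : ∃ t : ℝ, 0 < t ∧ M ≤ δ + t :=
    ⟨max 1 (M - δ), by positivity, by linarith [le_max_right 1 (M - δ)]⟩
  filter_upwards [hderiv, hM, hconv (ε / 2 / t) (by positivity)]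
    with a ha_deriv ha_far ha_bound z hz
  have hfar : ‖f a (z + t)‖ ≤ ε / 2 := ha_far _ <| by
    rw [add_re, ofReal_re]
    linarith
  calc ‖f a z‖ ≤ ‖f a (z + t)‖ + ε / 2 / t * t :=
        norm_le_norm_add_ofReal_add_mul_of_hasDerivWithinAt ha_deriv ha_bound hz ht.le
    _ = ‖f a (z + t)‖ + ε / 2 := by rw [div_mul_cancel₀ _ ht.ne']
    _ ≤ ε := by linarith

theorem stmt_18_general {ι : Type*} {p : Filter ι} {R : ℝ} {F : ι → ℂ → ℂ → E}
    (hderiv : ∀ᶠ j in p, ∀ l s : ℂ, δ ≤ l.re → R - 1 < s.re → s.re ≤ R →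
      HasDerivWithinAt (fun μ ↦ F j μ s) (F j l (s + 1)) {μ | δ ≤ μ.re} l)
    (hdecay : ∀ ε : ℝ, 0 < ε → ∃ M : ℝ, ∀ᶠ j in p, ∀ l s : ℂ,
      M ≤ l.re → R - 1 < s.re → s.re ≤ R → ‖F j l s‖ ≤ ε)
    (hconv : ∀ ε : ℝ, 0 < ε → ∀ᶠ j in p, ∀ l s : ℂ,
      δ ≤ l.re → R < s.re → s.re ≤ R + 1 → ‖F j l s‖ ≤ ε) {ε : ℝ} (hε : 0 < ε) :
    ∀ᶠ j in p, ∀ l s : ℂ, δ ≤ l.re → R - 1 < s.re → s.re ≤ R → ‖F j l s‖ ≤ ε := by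
  let strip : Set ℂ := {s | R - 1 < s.re ∧ s.re ≤ R}
  -- Uniformity in `s` is encoded by taking `(j, s)` as the index, along `p ×ˢ 𝓟 strip`.
  have hunif : ∀ᶠ a : ι × ℂ in p ×ˢ 𝓟 strip, ∀ l, δ ≤ l.re → ‖F a.1 l a.2‖ ≤ ε := by
    refine eventually_norm_le_of_hasDerivWithinAt_of_decay
      (f' := fun a l ↦ F a.1 l (a.2 + 1)) ?deriv ?decay ?conv hε
    case deriv =>
      refine eventually_prod_principal_iff.2 (hderiv.mono fun j hj s hs l hl ↦ ?_)
      exact hj l s hl hs.1 hs.2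
    case decay =>
      refine fun η hη ↦ (hdecay η hη).imp fun M hM ↦ eventually_prod_principal_iff.2 ?_
      exact hM.mono fun j hj s hs l hl ↦ hj l s hl hs.1 hs.2
    case conv =>
      refine fun η hη ↦ eventually_prod_principal_iff.2 ((hconv η hη).mono fun j hj s hs l hl ↦ ?_)
      have hre : (s + 1).re = s.re + 1 := by rw [add_re, one_re]
      exact hj l (s + 1) hl (by linarith [hs.1]) (by linarith [hs.2])
  exact (eventually_prod_principal_iff.1 hunif).mono fun j hj l s hl hs hs' ↦ hj s ⟨hs, hs'⟩ l hl

end HalfPlane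

/-- Inductive step propagating uniform convergence of a family of zeta-type functions from
the half plane `{Re s > R}` to `{Re s > R - 1}`, using the differential equation
`∂F_j/∂λ (λ, s) = F_j (λ, s + 1)` and uniform decay as `Re λ → ∞`. -/
theorem stmt_18 (δ R : ℝ) (hδ : 0 < δ) (F : ℕ → ℂ → ℂ → ℂ)
    (hderiv : ∀ (j : ℕ) (s : ℂ) (l : ℂ), 0 < l.re →
      HasDerivAt (fun μ : ℂ => F j μ s) (F j l (s + 1)) l)
    (hdecay : ∀ ε : ℝ, 0 < ε → ∃ M : ℝ, 0 < M ∧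
      ∀ (j : ℕ) (l s : ℂ), M ≤ l.re → R - 1 < s.re → s.re ≤ R + 1 → ‖F j l s‖ ≤ ε)
    (hconv : ∀ ε : ℝ, 0 < ε → ∃ J : ℕ,
      ∀ j ≥ J, ∀ (l s : ℂ), δ ≤ l.re → R < s.re → s.re ≤ R + 1 → ‖F j l s‖ ≤ ε) :
    ∀ ε : ℝ, 0 < ε → ∃ J : ℕ,
      ∀ j ≥ J, ∀ (l s : ℂ), δ ≤ l.re → R - 1 < s.re → s.re ≤ R → ‖F j l s‖ ≤ ε := by
  refine fun ε hε ↦ eventually_atTop.1 (stmt_18_general (.of_forall ?deriv) ?decay ?conv hε)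
  case deriv => exact fun j l s hl _ _ ↦ (hderiv j s l (hδ.trans_le hl)).hasDerivWithinAt
  case decay =>
    intro η hη
    obtain ⟨M, -, hM⟩ := hdecay η hη
    exact ⟨M, .of_forall fun j l s hl hs hs' ↦ hM j l s hl hs (by linarith)⟩
  case conv => exact fun η hη ↦ eventually_atTop.2 (hconv η hη)
end
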